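/- arXiv:1106.0928 — 2 statements merged into one kernel-verified Lean document; each statement's English description precedes it below -/
import Mathlib

section
/- Suppose ∇ is a flat ℝ-linear connection of L on E, p ≥ 2 is even, and there exists an ℝ-linear connection ∇_m of L on E that is metric with respect to h, i.e. ρ(a)(h(s,t)) = h((∇_m)_a s, t) + h(s, (∇_m)_a t) for all a ∈ L, s,t ∈ E. Then cs_p(∇, ∇^h) is d_ρ-exact: there exists a C-valued ℝ-linear (2p−2)-form η on L with d_ρ η = cs_p(∇, ∇^h); i.e. the secondary characteristic class u_{2p−1} = [cs_p(∇,∇^h)] vanishes. -/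
open Module

/-- The trace over `C` of an `ℝ`-linear endomorphism of `E` whose underlying
function happens to be `C`-linear (and `0` otherwise). -/
noncomputable def trR (C : Type*) {E : Type*} [CommRing C] [AddCommGroup E]
    [Module ℝ E] [Module C E] (e : E →ₗ[ℝ] E) : C :=
  letI := Classical.propDecidable
  if h : ∃ g : E →ₗ[C] E, ⇑g = ⇑e then LinearMap.trace C E h.choose else 0

/-- An ℝ-linear connection of the Lie algebra `L` (with anchor `ρ`) on the `C`-module `E`. -/
def IsConn {L C E : Type*} [LieRing L] [LieAlgebra ℝ L] [CommRing C] [Algebra ℝ C]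
    [AddCommGroup E] [Module ℝ E] [Module C E]
    (ρ : L →ₗ[ℝ] Derivation ℝ C C) (D : L →ₗ[ℝ] Module.End ℝ E) : Prop :=
  ∀ (a : L) (f : C) (e : E), D a (f • e) = f • D a e + ρ a f • e

/-- The curvature of an ℝ-linear map `D : L →ₗ[ℝ] End ℝ E`. -/
def curv {L E : Type*} [LieRing L] [LieAlgebra ℝ L] [AddCommGroup E] [Module ℝ E]
    (D : L →ₗ[ℝ] Module.End ℝ E) (a b : L) : Module.End ℝ E :=
  D a * D b - D b * D a - D ⁅a, b⁆

/-- The curvature as an `End ℝ E`-valued 2-form. -/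
def curv2 {L E : Type*} [LieRing L] [LieAlgebra ℝ L] [AddCommGroup E] [Module ℝ E]
    (D : L →ₗ[ℝ] Module.End ℝ E) : (Fin 2 → L) → Module.End ℝ E :=
  fun a => curv D (a 0) (a 1)

/-- The Chevalley–Eilenberg style differential of a `V`-valued `n`-form on `L`,
with respect to an action `act` of `L` on `V`:
`(dω)(a₁,…,a_{n+1}) = Σᵢ (−1)^{i+1} act(aᵢ)(ω(a₁,…,âᵢ,…)) +
  Σ_{i<j} (−1)^{i+j} ω(⁅aᵢ,aⱼ⁆, a₁,…,âᵢ,…,âⱼ,…)`. -/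
def dGen {L V : Type*} [LieRing L] [AddCommGroup V] (act : L → V → V) :
    {n : ℕ} → ((Fin n → L) → V) → ((Fin (n + 1) → L) → V)
  | 0, ω, a => act (a 0) (ω Fin.elim0)
  | (m + 1), ω, a =>
      (∑ i : Fin (m + 2), (-1 : ℤ) ^ (i : ℕ) • act (a i) (ω (fun k => a (i.succAbove k)))) +
      ∑ i : Fin (m + 2), ∑ j : Fin (m + 2),
        if h : (i : ℕ) < (j : ℕ) then
          (-1 : ℤ) ^ ((i : ℕ) + (j : ℕ)) • ω (Fin.cons ⁅a i, a j⁆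
            (fun k : Fin m => a (j.succAbove
              ((⟨(i : ℕ), by have := j.isLt; omega⟩ : Fin (m + 1)).succAbove k))))
        else 0

/-- The differential `d_ρ` on `C`-valued ℝ-linear forms on `L`. -/
def dRho {L C : Type*} [LieRing L] [LieAlgebra ℝ L] [CommRing C] [Algebra ℝ C]
    (ρ : L →ₗ[ℝ] Derivation ℝ C C) {n : ℕ} (ω : (Fin n → L) → C) :
    (Fin (n + 1) → L) → C :=
  dGen (fun a c => ρ a c) ω

/-- The differential `d^{∇̄}` on `End ℝ E`-valued ℝ-linear forms on `L`,
where `∇̄_a = [∇_a, ·]`. -/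
def dEnd {L E : Type*} [LieRing L] [LieAlgebra ℝ L] [AddCommGroup E] [Module ℝ E]
    (D : L →ₗ[ℝ] Module.End ℝ E) {n : ℕ} (ω : (Fin n → L) → Module.End ℝ E) :
    (Fin (n + 1) → L) → Module.End ℝ E :=
  dGen (fun a φ => D a * φ - φ * D a) ω

/-- The wedge product (with composition as multiplication of values) of
`End ℝ E`-valued forms:
`(ω∧η)(a₁,…,a_{m+n}) = (1/(m!·n!)) Σ_{τ} sgn τ · ω(a_{τ(1)},…) ∘ η(a_{τ(m+1)},…)`. -/
noncomputable def wedge {L E : Type*} [AddCommGroup E] [Module ℝ E] {m n : ℕ}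
    (ω : (Fin m → L) → Module.End ℝ E) (η : (Fin n → L) → Module.End ℝ E) :
    (Fin (m + n) → L) → Module.End ℝ E :=
  fun a => ((m.factorial * n.factorial : ℝ))⁻¹ •
    ∑ τ : Equiv.Perm (Fin (m + n)), ((Equiv.Perm.sign τ : ℤ) •
      (ω (fun i => a (τ (Fin.castAdd n i))) * η (fun j => a (τ (Fin.natAdd m j)))))

/-- The `p`-th wedge power of an `End ℝ E`-valued 2-form. -/
noncomputable def wpow {L E : Type*} [AddCommGroup E] [Module ℝ E]
    (R : (Fin 2 → L) → Module.End ℝ E) :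
    (p : ℕ) → (Fin (2 * p) → L) → Module.End ℝ E
  | 0 => fun _ => 1
  | (p + 1) => fun a => wedge R (wpow R p) (fun i => a (Fin.cast (by omega) i))

/-- The `k`-th wedge power of an `End ℝ E`-valued 1-form. -/
noncomputable def wpow1 {L E : Type*} [AddCommGroup E] [Module ℝ E]
    (θ : (Fin 1 → L) → Module.End ℝ E) :
    (k : ℕ) → (Fin k → L) → Module.End ℝ E
  | 0 => fun _ => 1
  | (k + 1) => fun a => wedge θ (wpow1 θ k) (fun i => a (Fin.cast (by omega) i))

/-- The Chern character form `ch_p(∇) = Tr_*((R^∇)^{∧p})`. -/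
noncomputable def chp {L E : Type*} (C : Type*) [LieRing L] [LieAlgebra ℝ L]
    [CommRing C] [AddCommGroup E] [Module ℝ E] [Module C E]
    (D : L →ₗ[ℝ] Module.End ℝ E) (p : ℕ) : (Fin (2 * p) → L) → C :=
  fun a => trR C (wpow (curv2 D) p a)

/-- `∫₀ˢ f(t) dt` for a function `f : ℝ → C` given by a polynomial with
coefficients in the ℝ-algebra `C` (and `0` if `f` is not polynomial). -/
noncomputable def intPolyTo {C : Type*} [CommRing C] [Algebra ℝ C] (s : ℝ) (f : ℝ → C) : C :=
  letI := Classical.propDecidable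
  if h : ∃ P : Polynomial C, ∀ t : ℝ, f t = Polynomial.eval (algebraMap ℝ C t) P then
    ∑ k ∈ Finset.range (h.choose.natDegree + 1),
      (s ^ (k + 1) / ((k : ℝ) + 1)) • h.choose.coeff k
  else 0

/-- The valuewise integral over the standard 2-simplex
`Δ² = {(t₁,t₂) : t₁ ≥ 0, t₂ ≥ 0, t₁ + t₂ ≤ 1}` of a `C`-valued polynomial function. -/
noncomputable def intSimplex2 {C : Type*} [CommRing C] [Algebra ℝ C] (f : ℝ → ℝ → C) : C :=
  intPolyTo 1 (fun t1 => intPolyTo (1 - t1) (fun t2 => f t1 t2))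

/-- The Chern–Simons transgression form for a pair of ℝ-linear connections:
`cs_p(∇⁰,∇¹) = p·∫₀¹ Tr_*(λ ∧ (R_t)^{∧(p−1)}) dt` where `λ = ∇¹ − ∇⁰` and
`R_t` is the curvature of `∇⁰ + t•λ`. -/
noncomputable def csPair {L E : Type*} (C : Type*) [LieRing L] [LieAlgebra ℝ L]
    [CommRing C] [Algebra ℝ C] [AddCommGroup E] [Module ℝ E] [Module C E]
    (D0 D1 : L →ₗ[ℝ] Module.End ℝ E) (p : ℕ) : (Fin (2 * (p - 1) + 1) → L) → C :=
  fun a => (p : ℝ) • intPolyTo 1 (fun t =>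
    trR C (wedge (fun v : Fin 1 → L => (D1 - D0) (v 0))
      (wpow (curv2 (D0 + t • (D1 - D0))) (p - 1))
      (fun i => a (Fin.cast (by omega) i))))

/-- The Chern–Simons transgression form for a triple of ℝ-linear connections:
`cs_p(∇⁰,∇¹,∇²) = −p(p−1)·∫_{Δ²} Tr_*(λ₁ ∧ λ₂ ∧ (R_{(t₁,t₂)})^{∧(p−2)}) dt₁dt₂`
where `λᵢ = ∇ⁱ − ∇⁰` and `R_{(t₁,t₂)}` is the curvature of `∇⁰ + t₁•λ₁ + t₂•λ₂`. -/
noncomputable def csTriple {L E : Type*} (C : Type*) [LieRing L] [LieAlgebra ℝ L]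
    [CommRing C] [Algebra ℝ C] [AddCommGroup E] [Module ℝ E] [Module C E]
    (D0 D1 D2 : L →ₗ[ℝ] Module.End ℝ E) (p : ℕ) : (Fin (2 * (p - 2) + 2) → L) → C :=
  fun a => (-((p : ℝ) * ((p : ℝ) - 1))) • intSimplex2 (fun t1 t2 =>
    trR C (wedge (fun v : Fin 1 → L => (D1 - D0) (v 0))
      (wedge (fun v : Fin 1 → L => (D2 - D0) (v 0))
        (wpow (curv2 (D0 + t1 • (D1 - D0) + t2 • (D2 - D0))) (p - 2)))
      (fun i => a (Fin.cast (by omega) i))))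


/-- The antisymmetrized product of a function with values in a ring. -/
noncomputable def antiProd {L A : Type*} [Ring A] (u : L → A) (n : ℕ) (a : Fin n → L) : A :=
  ∑ τ : Equiv.Perm (Fin n), ((Equiv.Perm.sign τ : ℤ) • (List.ofFn (fun i => u (a (τ i)))).prod)

theorem wedge_antiProd {L E : Type*} [AddCommGroup E] [Module ℝ E] (u : L → Module.End ℝ E)
    (m n : ℕ) (a : Fin (m + n) → L) :
    wedge (antiProd u m) (antiProd u n) a = antiProd u (m + n) a := by
  have key : ∀ (σ₁ : Equiv.Perm (Fin m)) (σ₂ : Equiv.Perm (Fin n)),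
      ∑ τ : Equiv.Perm (Fin (m + n)), ((Equiv.Perm.sign τ : ℤ) •
        (((Equiv.Perm.sign σ₁ : ℤ) • (List.ofFn (fun i => u (a (τ (Fin.castAdd n (σ₁ i)))))).prod)
          * ((Equiv.Perm.sign σ₂ : ℤ) •
              (List.ofFn (fun i => u (a (τ (Fin.natAdd m (σ₂ i)))))).prod)))
      = antiProd u (m + n) a := by
    intro σ₁ σ₂
    set κ : Equiv.Perm (Fin (m + n)) := finSumFinEquiv.permCongr (Equiv.sumCongr σ₁ σ₂) with hκ
    have hs : (Equiv.Perm.sign κ : ℤ) = Equiv.Perm.sign σ₁ * Equiv.Perm.sign σ₂ := by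
      rw [hκ, Equiv.Perm.sign_permCongr]
      have := Equiv.Perm.sign_sumCongr σ₁ σ₂
      rw [Equiv.Perm.sumCongr] at this
      rw [this]; simp
    unfold antiProd
    conv_rhs => rw [← Equiv.sum_comp (Equiv.mulRight κ)]
    refine Finset.sum_congr rfl fun τ _ => ?_
    rw [smul_mul_smul_comm, smul_smul, ← List.prod_append, ← List.ofFn_fin_append]
    congr 1
    · simp [hs]
    · congr 2
      funext i
      refine Fin.addCases (fun i => ?_) (fun i => ?_) i
      · simp [hκ, Equiv.permCongr_apply]
      · simp [hκ, Equiv.permCongr_apply]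
  unfold wedge
  have h2 : (∑ τ : Equiv.Perm (Fin (m + n)), ((Equiv.Perm.sign τ : ℤ) •
      (antiProd u m (fun i => a (τ (Fin.castAdd n i))) *
        antiProd u n (fun j => a (τ (Fin.natAdd m j))))))
      = ∑ σ₁ : Equiv.Perm (Fin m), ∑ σ₂ : Equiv.Perm (Fin n), antiProd u (m + n) a := by
    rw [Finset.sum_congr rfl fun σ₁ _ => Finset.sum_congr rfl fun σ₂ _ => (key σ₁ σ₂).symm]
    rw [Finset.sum_congr rfl fun σ₁ _ => Finset.sum_comm, Finset.sum_comm]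
    refine Finset.sum_congr rfl fun τ _ => ?_
    simp only [antiProd, Finset.sum_mul_sum, Finset.smul_sum]
  rw [h2]
  simp only [Finset.sum_const, Finset.card_univ, Fintype.card_perm, Fintype.card_fin, smul_smul]
  rw [← Nat.cast_smul_eq_nsmul ℝ, smul_smul]
  push_cast
  rw [inv_mul_cancel₀, one_smul]
  positivity

theorem antiProd_cast {L A : Type*} [Ring A] (u : L → A) {m n : ℕ} (h : m = n)
    (a : Fin n → L) : antiProd u m (fun i => a (Fin.cast h i)) = antiProd u n a := by
  subst h; rfl

theorem wedge_smul_smul {L E : Type*} [AddCommGroup E] [Module ℝ E] {m n : ℕ} (c d : ℝ)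
    (ω : (Fin m → L) → Module.End ℝ E) (η : (Fin n → L) → Module.End ℝ E) (a : Fin (m + n) → L) :
    wedge (fun v => c • ω v) (fun v => d • η v) a = (c * d) • wedge ω η a := by
  unfold wedge
  rw [smul_comm, Finset.smul_sum (r := c * d)]
  congr 1
  refine Finset.sum_congr rfl fun τ _ => ?_
  rw [smul_mul_smul_comm, smul_comm]

theorem wpow_antiProd {L E : Type*} [AddCommGroup E] [Module ℝ E] (u : L → Module.End ℝ E)
    (R : (Fin 2 → L) → Module.End ℝ E) (c : ℝ) (hR : ∀ v, R v = c • antiProd u 2 v) (k : ℕ) :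
    ∀ a, wpow R k a = c ^ k • antiProd u (2 * k) a := by
  induction k with
  | zero => intro a; simp [wpow, antiProd]
  | succ k ih =>
    intro a
    have h1 : R = fun v => c • antiProd u 2 v := funext hR
    have h2 : wpow R k = fun v => c ^ k • antiProd u (2 * k) v := funext ih
    rw [wpow, h2]
    nth_rewrite 1 [h1]
    beta_reduce
    rw [wedge_smul_smul, wedge_antiProd, antiProd_cast, pow_succ']

theorem trR_restrict {C E : Type*} [CommRing C] [Algebra ℝ C] [AddCommGroup E]
    [Module ℝ E] [Module C E] (e : E →ₗ[ℝ] E) (g : E →ₗ[C] E) (hg : ⇑g = ⇑e) :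
    trR C e = LinearMap.trace C E g := by
  have hex : ∃ g : E →ₗ[C] E, ⇑g = ⇑e := ⟨g, hg⟩
  unfold trR
  rw [dif_pos hex]
  congr 1
  exact DFunLike.coe_injective (hex.choose_spec.trans hg.symm)

theorem trace_adj {C E : Type*} [CommRing C] [AddCommGroup E] [Module C E]
    [Module.Finite C E] [Module.Free C E]
    (h : E →ₗ[C] E →ₗ[C] C) (hnd : Function.Bijective (⇑h)) (T T' : E →ₗ[C] E)
    (hT : ∀ s t, h (T s) t = h s (T' t)) : LinearMap.trace C E T = LinearMap.trace C E T' := by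
  let e : E ≃ₗ[C] Module.Dual C E := LinearEquiv.ofBijective h hnd
  rw [← LinearMap.trace_transpose' T', ← LinearMap.trace_conj' T e]
  congr 1
  ext φ t
  obtain ⟨s, rfl⟩ := e.surjective φ
  simpa [LinearEquiv.conj_apply, e, Module.Dual.transpose_apply] using hT s t

theorem adj_prod {C E : Type*} [CommRing C] [AddCommGroup E] [Module C E]
    (h : E →ₗ[C] E →ₗ[C] C) (l : List (Module.End C E))
    (hl : ∀ T ∈ l, ∀ s t, h (T s) t = h s (T t)) :
    ∀ s t, h (l.prod s) t = h s (l.reverse.prod t) := by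
  induction l with
  | nil => simp
  | cons T l ih =>
    intro s t
    simp only [List.prod_cons, List.reverse_cons, List.prod_append, Module.End.mul_apply,
      List.prod_nil, mul_one]
    rw [hl T (by simp), ih (fun T hT => hl T (by simp [hT]))]

theorem sign_rev (n : ℕ) :
    Equiv.Perm.sign (Fin.revPerm : Equiv.Perm (Fin n)) = (-1) ^ (n * (n - 1) / 2) := by
  rw [Equiv.Perm.sign_eq_prod_prod_Iio, ← Finset.sum_range_id, ← Fin.sum_univ_eq_sum_range,
    ← Finset.prod_pow_eq_pow_sum]
  refine Finset.prod_congr rfl fun j _ => ?_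
  rw [Finset.prod_congr rfl (g := fun _ => (-1 : ℤˣ))]
  · simp
  · intro i hi
    rw [Finset.mem_Iio] at hi
    simp [hi.le]

theorem ofFn_reverse_aux {A : Type*} {n : ℕ} (f : Fin n → A) :
    (List.ofFn f).reverse = List.ofFn (fun i => f (Fin.rev i)) := by
  apply List.ext_getElem
  · simp
  · intro i h1 h2
    simp only [List.getElem_reverse, List.getElem_ofFn, List.length_ofFn]
    congr 1
    ext
    simp [Fin.rev]
    omega

theorem trace_antiProd {L C E : Type*} [CommRing C] [Algebra ℝ C] [AddCommGroup E] [Module C E]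
    [Module.Finite C E] [Module.Free C E]
    (h : E →ₗ[C] E →ₗ[C] C) (hnd : Function.Bijective (⇑h)) (u : L → Module.End C E)
    (hu : ∀ a s t, h (u a s) t = h s (u a t)) (n : ℕ)
    (hn : Equiv.Perm.sign (Fin.revPerm : Equiv.Perm (Fin n)) = -1)
    (a : Fin n → L) : LinearMap.trace C E (antiProd u n a) = 0 := by
  have h1 : LinearMap.trace C E (antiProd u n a) = - LinearMap.trace C E (antiProd u n a) := by
    conv_rhs => rw [antiProd, ← Equiv.sum_comp (Equiv.mulRight Fin.revPerm)]
    rw [antiProd, map_sum, map_sum, ← Finset.sum_neg_distrib]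
    refine Finset.sum_congr rfl fun τ _ => ?_
    rw [map_zsmul, map_zsmul]
    simp only [Equiv.coe_mulRight, Equiv.Perm.sign_mul, hn, Equiv.Perm.mul_apply]
    rw [trace_adj h hnd _ _ (adj_prod h _ ?_)]
    · rw [ofFn_reverse_aux]
      simp
    · intro T hT
      rw [List.mem_ofFn] at hT
      obtain ⟨i, rfl⟩ := hT
      exact hu _
  have h2 : (2 : ℝ) • LinearMap.trace C E (antiProd u n a) = 0 := by
    rw [two_smul]; nth_rewrite 1 [h1]; simp
  simpa using h2

theorem poly_zero {C : Type*} [CommRing C] [Algebra ℝ C] (P : Polynomial C)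
    (hP : ∀ t : ℝ, (0 : C) = Polynomial.eval (algebraMap ℝ C t) P) (k : ℕ) : P.coeff k = 0 := by
  rw [← Module.forall_dual_apply_eq_zero_iff ℝ]
  intro φ
  let Q : Polynomial ℝ := ∑ i ∈ Finset.range (P.natDegree + 1),
    Polynomial.monomial i (φ (P.coeff i))
  have hQ : Q = 0 := by
    apply Polynomial.funext
    intro t
    have := congrArg φ (hP t)
    rw [Polynomial.eval_eq_sum_range, map_sum] at this
    simp only [Q, Polynomial.eval_finsetSum, Polynomial.eval_monomial, Polynomial.eval_zero]
    rw [map_zero] at this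
    rw [this]
    refine Finset.sum_congr rfl fun i _ => ?_
    rw [← map_pow, mul_comm (P.coeff i), ← Algebra.smul_def, map_smul, smul_eq_mul, mul_comm]
  have hk := congrArg (fun q => Polynomial.coeff q k) hQ
  simp only [Q, Polynomial.finsetSum_coeff, Polynomial.coeff_monomial, Polynomial.coeff_zero,
    Finset.sum_ite_eq', Finset.mem_range] at hk
  by_cases hlt : k < P.natDegree + 1
  · simpa [hlt] using hk
  · rw [Polynomial.coeff_eq_zero_of_natDegree_lt (by omega), map_zero]

theorem intPolyTo_zero {C : Type*} [CommRing C] [Algebra ℝ C] (s : ℝ) :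
    intPolyTo s (fun _ => (0 : C)) = 0 := by
  unfold intPolyTo
  split_ifs with hex
  · refine Finset.sum_eq_zero fun k _ => ?_
    rw [poly_zero _ hex.choose_spec, smul_zero]
  · rfl

theorem dRho_zero {L C : Type*} [LieRing L] [LieAlgebra ℝ L] [CommRing C] [Algebra ℝ C]
    (ρ : L →ₗ[ℝ] Derivation ℝ C C) (n : ℕ) (v : Fin (n + 1) → L) :
    dRho ρ (fun _ : Fin n → L => (0 : C)) v = 0 := by
  cases n <;> simp [dRho, dGen]

/-- for flat `∇`, even `p ≥ 2`, and assuming a metric ℝ-linear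
connection exists, the secondary characteristic class `u_{2p−1} = [cs_p(∇,∇^h)]`
vanishes: `cs_p(∇,∇^h)` is `d_ρ`-exact. -/
theorem stmt15 {L : Type*} {C : Type*} {E : Type*}
    [LieRing L] [LieAlgebra ℝ L] [CommRing C] [Algebra ℝ C] [Module C L]
    [AddCommGroup E] [Module ℝ E] [Module C E] [IsScalarTower ℝ C E]
    [Module.Finite C E] [Module.Free C E]
    (ρ : L →ₗ[ℝ] Derivation ℝ C C)
    (hρ : ∀ (a b : L) (f : C), ρ ⁅a, b⁆ f = ρ a (ρ b f) - ρ b (ρ a f))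
    (hLeib : ∀ (a b : L) (f : C), ⁅a, f • b⁆ = f • ⁅a, b⁆ + ρ a f • b)
    (h : E →ₗ[C] E →ₗ[C] C) (hsymm : ∀ s t : E, h s t = h t s)
    (hnd : Function.Bijective (⇑h))
    (D Dh : L →ₗ[ℝ] Module.End ℝ E) (hD : IsConn ρ D) (hDh : IsConn ρ Dh)
    (hadj : ∀ (a : L) (s t : E), ρ a (h s t) = h (D a s) t + h s (Dh a t))
    (hflat : ∀ a b : L, curv D a b = 0)
    (hm : ∃ Dm : L →ₗ[ℝ] Module.End ℝ E, IsConn ρ Dm ∧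
      ∀ (a : L) (s t : E), ρ a (h s t) = h (Dm a s) t + h s (Dm a t))
    (p : ℕ) (hp : 2 ≤ p) (hpeven : Even p) :
    ∃ η : AlternatingMap ℝ L C (Fin (2 * p - 2)),
      dRho ρ (⇑η) = fun v => csPair C D Dh p (fun i => v (Fin.cast (by omega) i)) := by

  refine ⟨0, ?_⟩
  funext v
  have h0 : (⇑(0 : AlternatingMap ℝ L C (Fin (2 * p - 2)))) = fun _ => 0 := rfl
  rw [h0, dRho_zero]
  -- the difference is C-linear and self-adjoint
  let u : L → Module.End C E := fun a =>
    { toFun := (Dh - D) a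
      map_add' := map_add _
      map_smul' := fun f e => by
        simp only [LinearMap.sub_apply, hD a f e, hDh a f e, RingHom.id_apply, smul_sub]
        abel }
  have hu : ∀ a s t, h (u a s) t = h s (u a t) := by
    intro a s t
    have e1 := hadj a s t
    have e2 := hadj a t s
    rw [hsymm t s, hsymm (D a t) s, hsymm t (Dh a s)] at e2
    change h (Dh a s - D a s) t = h s (Dh a t - D a t)
    rw [map_sub, map_sub, LinearMap.sub_apply]
    linear_combination e1 - e2
  let w : L → Module.End ℝ E := fun a => (Dh - D) a
  have hflat' : ∀ a b : L, curv Dh a b = 0 := by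
    intro a b
    ext t
    apply hnd.1
    ext s
    rw [LinearMap.zero_apply, map_zero, LinearMap.zero_apply, hsymm]
    have e0 := hρ a b (h s t)
    have e1 : h (curv D a b s) t = 0 := by rw [hflat]; simp
    simp only [hadj, map_add] at e0
    simp only [curv, LinearMap.sub_apply, Module.End.mul_apply, map_sub] at e1 ⊢
    linear_combination -e0 - e1
  have hR : ∀ (t : ℝ) (x : Fin 2 → L),
      curv2 (D + t • (Dh - D)) x = (t ^ 2 - t) • antiProd w 2 x := by
    intro t x
    have e1 := hflat (x 0) (x 1)
    have e2 := hflat' (x 0) (x 1)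
    have e3 : antiProd w 2 x = w (x 0) * w (x 1) - w (x 1) * w (x 0) := by
      have hU : (Finset.univ : Finset (Equiv.Perm (Fin 2))) = {1, Equiv.swap 0 1} := by decide
      rw [antiProd, hU, Finset.sum_pair (by decide)]
      simp [List.ofFn_succ, sub_eq_add_neg]
    rw [e3]
    simp only [curv, sub_eq_zero] at e1 e2
    simp only [curv2, curv, w, LinearMap.add_apply, LinearMap.smul_apply, LinearMap.sub_apply,
      ← e1, ← e2, mul_add, add_mul, mul_sub, sub_mul, smul_sub, smul_mul_assoc, mul_smul_comm]
    module
  have hprod : ∀ l : List L, ⇑((l.map u).prod) = ⇑((l.map w).prod) := by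
    intro l
    induction l with
    | nil => rfl
    | cons x l ih =>
      simp only [List.map_cons, List.prod_cons, Module.End.coe_mul, ih]
      rfl
  have hanti : ∀ (n : ℕ) (a : Fin n → L), ⇑(antiProd u n a) = ⇑(antiProd w n a) := by
    intro n a
    funext e
    simp only [antiProd, LinearMap.sum_apply, LinearMap.smul_apply]
    refine Finset.sum_congr rfl fun τ _ => ?_
    have := congrFun (hprod (List.ofFn (fun i => a (τ i)))) e
    simp only [List.map_ofFn] at this
    exact congrArg _ this
  obtain ⟨q, rfl⟩ := hpeven
  unfold csPair
  have hf : ∀ (a : Fin (1 + 2 * (q + q - 1)) → L) (t : ℝ),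
      trR C (wedge (fun v : Fin 1 → L => (Dh - D) (v 0))
      (wpow (curv2 (D + t • (Dh - D))) (q + q - 1)) a) = 0 := by
    intro a t
    have e1 : (fun v : Fin 1 → L => (Dh - D) (v 0)) = fun v => (1 : ℝ) • antiProd w 1 v := by
      funext v; simp [antiProd, w]
    have e2 := funext (wpow_antiProd w _ _ (hR t) (q + q - 1))
    rw [e1, e2, wedge_smul_smul, wedge_antiProd, one_mul]
    rw [trR_restrict _ (algebraMap ℝ C ((t ^ 2 - t) ^ (q + q - 1)) • antiProd u _ a)]
    · rw [map_smul, trace_antiProd h hnd u hu, smul_zero]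
      rw [sign_rev]
      obtain ⟨r, rfl⟩ : ∃ r, q = r + 1 := ⟨q - 1, by omega⟩
      have e3 : (1 + 2 * (r + 1 + (r + 1) - 1)) * (1 + 2 * (r + 1 + (r + 1) - 1) - 1) / 2
          = 2 * (4 * r ^ 2 + 5 * r + 1) + 1 := by
        have e4 : r + 1 + (r + 1) - 1 = 2 * r + 1 := by omega
        rw [e4]
        apply Nat.div_eq_of_eq_mul_left (by norm_num)
        rw [Nat.add_sub_cancel_left]
        ring
      rw [e3, pow_succ, pow_mul]
      simp
    · funext e
      rw [LinearMap.smul_apply, LinearMap.smul_apply, hanti, algebraMap_smul]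
  simp_rw [hf, intPolyTo_zero, smul_zero]
end

section
/- Suppose ∇ is a flat ℝ-linear connection of L on E, p ≥ 1 is odd, and ∇_m is an ℝ-linear connection of L on E that is metric with respect to h, i.e. ρ(a)(h(s,t)) = h((∇_m)_a s, t) + h(s, (∇_m)_a t) for all a ∈ L, s,t ∈ E. Then cs_p(∇, ∇_m) is closed (d_ρ(cs_p(∇,∇_m)) = 0), and cs_p(∇, ∇^h) − 2·cs_p(∇, ∇_m) is d_ρ-exact; hence the secondary characteristic class satisfies u_{2p−1} = [2·cs_p(∇,∇_m)]. -/
open Module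

set_option linter.unusedSectionVars false
set_option linter.unusedSimpArgs false


/-- Noncommutative forms on `L` with values in `B`: functions on words. -/
def Om (L B : Type*) := List L → B

namespace Om

instance {L B : Type*} [AddCommGroup B] : AddCommGroup (Om L B) :=
  inferInstanceAs (AddCommGroup (List L → B))

section basic
variable {L B : Type*} [AddCommGroup B]

@[ext] theorem ext' {x y : Om L B} (h : ∀ l : List L, x l = y l) : x = y := funext h

@[simp] theorem add_ap (x y : Om L B) (l : List L) : (x + y) l = x l + y l := rfl
@[simp] theorem sub_ap (x y : Om L B) (l : List L) : (x - y) l = x l - y l := rfl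
@[simp] theorem neg_ap (x : Om L B) (l : List L) : (-x) l = - x l := rfl
@[simp] theorem zero_ap (l : List L) : (0 : Om L B) l = 0 := rfl
theorem nsmul_ap (n : ℕ) (x : Om L B) (l : List L) : (n • x) l = n • x l := rfl
theorem sum_ap {ι : Type*} (s : Finset ι) (f : ι → Om L B) (l : List L) :
    (∑ i ∈ s, f i) l = ∑ i ∈ s, f i l := Finset.sum_apply l s f

/-- contraction -/
def io (a : L) : Om L B →+ Om L B where
  toFun x := fun l => x (a :: l)
  map_zero' := rfl
  map_add' _ _ := rfl

@[simp] theorem io_ap (a : L) (x : Om L B) (l : List L) : io a x l = x (a :: l) := rfl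

/-- parity -/
def sg : Om L B →+ Om L B where
  toFun x := fun l => (-1 : ℤ) ^ l.length • x l
  map_zero' := by ext l; simp
  map_add' x y := by funext l; exact smul_add _ _ _

theorem sg_ap (x : Om L B) (l : List L) : sg x l = (-1 : ℤ) ^ l.length • x l := rfl

theorem io_sg (a : L) (x : Om L B) : io a (sg x) = - sg (io a x) := by
  ext l; simp [sg_ap, pow_succ]

@[simp] theorem sg_nil (x : Om L B) : sg x [] = x [] := by simp [sg_ap]

@[simp] theorem sg_sg (x : Om L B) : sg (sg x) = x := by
  ext l; simp [sg_ap, smul_smul, ← mul_pow]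

/-- constants -/
def of0 (c : B) : Om L B
  | [] => c
  | _ :: _ => 0

/-- one-forms -/
def of1 (α : L → B) : Om L B
  | [] => 0
  | a :: l => of0 (α a) l

@[simp] theorem of0_nil (c : B) : of0 (L := L) c [] = c := rfl
@[simp] theorem of1_nil (α : L → B) : of1 α [] = 0 := rfl
@[simp] theorem io_of0 (a : L) (c : B) : io a (of0 c) = 0 := rfl
@[simp] theorem io_of1 (a : L) (α : L → B) : io a (of1 α) = of0 (α a) := rfl

theorem ext_io {x y : Om L B} (h0 : x [] = y []) (h : ∀ a, io a x = io a y) : x = y := by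
  ext l
  cases l with
  | nil => exact h0
  | cons a l => exact congrFun (h a) l

@[simp] theorem sg_of0 (c : B) : sg (of0 (L := L) c) = of0 c := by
  apply ext_io
  · simp
  · intro a; simp [io_sg]

@[simp] theorem sg_of1 (α : L → B) : sg (of1 α) = - of1 α := by
  apply ext_io
  · simp
  · intro a; simp [io_sg]

theorem of0_add (c d : B) : of0 (L := L) (c + d) = of0 c + of0 d := by
  apply ext_io <;> simp
theorem of0_sub (c d : B) : of0 (L := L) (c - d) = of0 c - of0 d := by
  apply ext_io <;> simp
theorem of1_add (c d : L → B) : of1 (fun a => c a + d a) = of1 c + of1 d := by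
  apply ext_io <;> simp [of0_add]
theorem of1_sub (c d : L → B) : of1 (fun a => c a - d a) = of1 c - of1 d := by
  apply ext_io <;> simp [of0_sub]
@[simp] theorem of0_zero : of0 (L := L) (0 : B) = 0 := by
  apply ext_io <;> simp

end basic

section ring
variable {L B : Type*} [Ring B]

/-- signed shuffle product -/
def shMul : List L → Om L B → Om L B → B
  | [], x, y => x [] * y []
  | a :: l, x, y => shMul l (io a x) y + shMul l (sg x) (io a y)

instance : Mul (Om L B) := ⟨fun x y l => shMul l x y⟩

theorem mul_nil (x y : Om L B) : (x * y) [] = x [] * y [] := rfl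
theorem io_mul (a : L) (x y : Om L B) : io a (x * y) = io a x * y + sg x * io a y := rfl
theorem mul_cons (a : L) (l : List L) (x y : Om L B) :
    (x * y) (a :: l) = (io a x * y) l + (sg x * io a y) l := rfl

theorem add_mul_ap (l : List L) (x y z : Om L B) :
    ((x + y) * z) l = (x * z) l + (y * z) l := by
  induction l generalizing x y z with
  | nil => simp [mul_nil, add_mul]
  | cons a l ih => simp only [mul_cons, map_add, ih]; abel

theorem mul_add_ap (l : List L) (x y z : Om L B) :
    (x * (y + z)) l = (x * y) l + (x * z) l := by
  induction l generalizing x y z with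
  | nil => simp [mul_nil, mul_add]
  | cons a l ih => simp only [mul_cons, map_add, ih]; abel

theorem zero_mul_ap (l : List L) (x : Om L B) : ((0 : Om L B) * x) l = 0 := by
  have := add_mul_ap l 0 0 x
  simpa using this

theorem mul_zero_ap (l : List L) (x : Om L B) : (x * (0 : Om L B)) l = 0 := by
  have := mul_add_ap l x 0 0
  simpa using this

theorem neg_mul_ap (l : List L) (x y : Om L B) : ((-x) * y) l = - (x * y) l := by
  have := add_mul_ap l (-x) x y
  rw [neg_add_cancel, zero_mul_ap] at this
  exact eq_neg_of_add_eq_zero_left this.symm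

theorem mul_neg_ap (l : List L) (x y : Om L B) : (x * (-y)) l = - (x * y) l := by
  have := mul_add_ap l x (-y) y
  rw [neg_add_cancel, mul_zero_ap] at this
  exact eq_neg_of_add_eq_zero_left this.symm

theorem sg_mul_ap (l : List L) (x y : Om L B) : (sg x * sg y) l = sg (x * y) l := by
  induction l generalizing x y with
  | nil => simp [mul_nil]
  | cons a l ih =>
    have e : sg (x * y) (a :: l) = io a (sg (x * y)) l := rfl
    rw [e, io_sg, io_mul, mul_cons, io_sg, io_sg, map_add, neg_ap, add_ap, neg_mul_ap, mul_neg_ap,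
      ih, ih]
    abel

theorem of0_mul_ap (l : List L) (c : B) (x : Om L B) : (of0 c * x : Om L B) l = c * x l := by
  induction l generalizing x with
  | nil => simp [mul_nil]
  | cons a l ih => simp [mul_cons, zero_mul_ap, ih]

theorem mul_of0_ap (l : List L) (c : B) (x : Om L B) : (x * of0 c : Om L B) l = x l * c := by
  induction l generalizing x with
  | nil => simp [mul_nil]
  | cons a l ih => simp [mul_cons, mul_zero_ap, ih]

theorem mul_assoc_ap (l : List L) (x y z : Om L B) : ((x * y) * z) l = (x * (y * z)) l := by
  induction l generalizing x y z with
  | nil => simp [mul_nil, mul_assoc]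
  | cons a l ih =>
    have e : sg (x * y) = sg x * sg y := by ext l; exact (sg_mul_ap l x y).symm
    simp only [mul_cons, io_mul, add_mul_ap, mul_add_ap, ih, e]
    abel

instance : One (Om L B) := ⟨of0 1⟩
theorem one_def : (1 : Om L B) = of0 1 := rfl

instance : Ring (Om L B) :=
  { (inferInstance : AddCommGroup (Om L B)), (inferInstance : Mul (Om L B)),
    (inferInstance : One (Om L B)) with
    left_distrib := fun x y z => by ext l; exact mul_add_ap l x y z
    right_distrib := fun x y z => by ext l; exact add_mul_ap l x y z
    zero_mul := fun x => by ext l; exact zero_mul_ap l x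
    mul_zero := fun x => by ext l; exact mul_zero_ap l x
    mul_assoc := fun x y z => by ext l; exact mul_assoc_ap l x y z
    one_mul := fun x => by ext l; rw [one_def, of0_mul_ap, one_mul]
    mul_one := fun x => by ext l; rw [one_def, mul_of0_ap, mul_one] }

theorem sg_mul (x y : Om L B) : sg (x * y) = sg x * sg y := by
  ext l; exact (sg_mul_ap l x y).symm

theorem sg_one : sg (1 : Om L B) = 1 := by rw [one_def, sg_of0]

theorem sg_pow {x : Om L B} (hx : sg x = x) (n : ℕ) : sg (x ^ n) = x ^ n := by
  induction n with
  | zero => simp [sg_one]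
  | succ n ih => rw [pow_succ, sg_mul, ih, hx]

end ring

section map
variable {L B B' B'' : Type*}

def mp [AddCommGroup B] [AddCommGroup B'] (f : B →+ B') : Om L B →+ Om L B' where
  toFun x := fun l => f (x l)
  map_zero' := by ext l; simp
  map_add' x y := by funext l; exact map_add f _ _

section
variable [AddCommGroup B] [AddCommGroup B'] [AddCommGroup B'']

theorem mp_ap (f : B →+ B') (x : Om L B) (l : List L) : mp f x l = f (x l) := rfl
theorem io_mp (f : B →+ B') (a : L) (x : Om L B) : io a (mp f x) = mp f (io a x) := rfl
theorem sg_mp (f : B →+ B') (x : Om L B) : sg (mp f x) = mp f (sg x) := by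
  ext l; simp [sg_ap, mp_ap]
theorem mp_of0 (f : B →+ B') (c : B) : mp f (of0 (L := L) c) = of0 (f c) := by
  apply ext_io <;> simp [mp_ap, io_mp]
theorem mp_of1 (f : B →+ B') (α : L → B) : mp f (of1 α) = of1 (fun a => f (α a)) := by
  apply ext_io <;> simp [mp_ap, io_mp, mp_of0]
theorem mp_mp (f : B →+ B') (g : B' →+ B'') (x : Om L B) : mp g (mp f x) = mp (g.comp f) x := rfl
end

/-- valuewise derivations are derivations -/
theorem mp_der [Ring B] (f : B →+ B) (hf : ∀ x y, f (x * y) = f x * y + x * f y) (x y : Om L B) :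
    mp f (x * y) = mp f x * y + x * mp f y := by
  ext l
  induction l generalizing x y with
  | nil => simp [mul_nil, mp_ap, hf]
  | cons a l ih =>
    have e : mp f (x * y) (a :: l) = mp f (io a x * y) l + mp f (sg x * io a y) l := by
      simp [mp_ap, mul_cons]
    rw [e, ih, ih]
    simp only [add_ap, mul_cons, io_mp, sg_mp]
    abel

/-- valuewise ring homs are ring homs -/
theorem mp_mul [Ring B] [Ring B'] (f : B →+ B') (hf : ∀ x y, f (x * y) = f x * f y)
    (x y : Om L B) :
    mp f (x * y) = mp f x * mp f y := by
  ext l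
  induction l generalizing x y with
  | nil => simp [mul_nil, mp_ap, hf]
  | cons a l ih =>
    have e : mp f (x * y) (a :: l) = mp f (io a x * y) l + mp f (sg x * io a y) l := by
      simp [mp_ap, mul_cons]
    rw [e, ih, ih]
    simp only [mul_cons, io_mp, sg_mp]

theorem mp_pow [Ring B] [Ring B'] (f : B →+ B') (hf : ∀ x y, f (x * y) = f x * f y)
    (h1 : f 1 = 1) (x : Om L B) (n : ℕ) : mp f (x ^ n) = mp f x ^ n := by
  induction n with
  | zero => simp [one_def, mp_of0, h1]
  | succ n ih => rw [pow_succ, pow_succ, mp_mul f hf, ih]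

/-- graded reversal -/
theorem mp_rev_aux {B V : Type*} [Ring B] [Ring B'] [AddCommGroup V] (f : B →+ V) (g : B' →+ V)
    (φ : B →+ B')
    (h : ∀ x y, f (x * y) = g (φ y * φ x)) (l : List L) : ∀ (x y : Om L B),
    (sg x = x → mp f (x * y) l = mp g (mp φ y * mp φ x) l) ∧
    (sg x = -x → mp f (x * y) l = mp g (mp φ (sg y) * mp φ x) l) := by
  induction l with
  | nil => intro x y; simp [mp_ap, mul_nil, h]
  | cons a l ih =>
    intro x y
    have e : mp f (x * y) (a :: l) = mp f (io a x * y) l + mp f (sg x * io a y) l := by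
      simp [mp_ap, mul_cons]
    have e' : ∀ z w : Om L B', mp g (z * w) (a :: l) =
        mp g (io a z * w) l + mp g (sg z * io a w) l := by
      intro z w; simp [mp_ap, mul_cons]
    constructor
    · intro hx
      have h2 : sg (io a x) = - io a x := by
        have := io_sg a x; rw [hx] at this; exact (neg_eq_iff_eq_neg.mpr this).symm
      rw [e, e', hx, (ih _ _).2 h2, (ih _ _).1 hx, io_mp, io_mp, sg_mp, add_comm]
    · intro hx
      have h2 : sg (io a x) = io a x := by
        have := io_sg a x; rw [hx, map_neg] at this; exact (neg_injective this).symm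
      rw [e, e', hx, (ih _ _).1 h2, neg_mul, map_neg, neg_ap, (ih _ _).2 hx, io_mp, io_mp, io_sg,
        sg_mp, sg_sg, map_neg, neg_mul, map_neg, neg_ap, add_comm]

theorem mp_rev_even {B V : Type*} [Ring B] [Ring B'] [AddCommGroup V] (f : B →+ V) (g : B' →+ V)
    (φ : B →+ B') (h : ∀ x y, f (x * y) = g (φ y * φ x)) {x : Om L B} (hx : sg x = x) (y : Om L B) :
    mp f (x * y) = mp g (mp φ y * mp φ x) := by
  ext l; exact (mp_rev_aux f g φ h l x y).1 hx

/-- graded cyclicity of traces -/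
theorem tr_even [Ring B] {V : Type*} [AddCommGroup V] (f : B →+ V)
    (h : ∀ x y, f (x * y) = f (y * x)) {x : Om L B} (hx : sg x = x) (y : Om L B) :
    mp f (x * y) = mp f (y * x) := by
  ext l; exact (mp_rev_aux f f (AddMonoidHom.id B) h l x y).1 hx

theorem tr_odd [Ring B] {V : Type*} [AddCommGroup V] (f : B →+ V)
    (h : ∀ x y, f (x * y) = f (y * x)) {x : Om L B} (hx : sg x = -x) (y : Om L B) :
    mp f (x * y) = mp f (sg y * x) := by
  ext l; exact (mp_rev_aux f f (AddMonoidHom.id B) h l x y).2 hx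

end map

section diff
variable {L B M : Type*} [LieRing L]

section
variable [AddCommGroup B] [AddCommGroup M]

/-- Lie derivative -/
def lieAux (act : L → B →+ B) (a : L) : List L → Om L B → B
  | [], x => act a (x [])
  | b :: l, x => lieAux act a l (io b x) - x (⁅a, b⁆ :: l)

theorem lieAux_add (act : L → B →+ B) (a : L) (l : List L) (x y : Om L B) :
    lieAux act a l (x + y) = lieAux act a l x + lieAux act a l y := by
  induction l generalizing x y with
  | nil => simp [lieAux]
  | cons b l ih => simp only [lieAux, map_add, ih, add_ap]; abel

/-- Lie derivative -/
def lie (act : L → B →+ B) (a : L) : Om L B →+ Om L B :=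
  AddMonoidHom.mk' (fun x l => lieAux act a l x) (fun x y => by ext l; exact lieAux_add act a l x y)

theorem lie_nil (act : L → B →+ B) (a : L) (x : Om L B) : lie act a x [] = act a (x []) := rfl
theorem io_lie (act : L → B →+ B) (a b : L) (x : Om L B) :
    io b (lie act a x) = lie act a (io b x) - io ⁅a, b⁆ x := rfl
theorem lie_cons (act : L → B →+ B) (a b : L) (l : List L) (x : Om L B) :
    lie act a x (b :: l) = lie act a (io b x) l - io ⁅a, b⁆ x l := rfl

/-- differential -/
def ddAux (act : L → B →+ B) : List L → Om L B → B
  | [], _ => 0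
  | a :: l, x => lie act a x l - ddAux act l (io a x)

theorem ddAux_add (act : L → B →+ B) (l : List L) (x y : Om L B) :
    ddAux act l (x + y) = ddAux act l x + ddAux act l y := by
  induction l generalizing x y with
  | nil => simp [ddAux]
  | cons b l ih => simp only [ddAux, map_add, ih, add_ap]; abel

/-- differential -/
def dd (act : L → B →+ B) : Om L B →+ Om L B :=
  AddMonoidHom.mk' (fun x l => ddAux act l x) (fun x y => by ext l; exact ddAux_add act l x y)

theorem dd_nil (act : L → B →+ B) (x : Om L B) : dd act x [] = 0 := rfl
theorem io_dd (act : L → B →+ B) (a : L) (x : Om L B) :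
    io a (dd act x) = lie act a x - dd act (io a x) := rfl
theorem dd_cons (act : L → B →+ B) (a : L) (l : List L) (x : Om L B) :
    dd act x (a :: l) = lie act a x l - dd act (io a x) l := rfl

theorem sg_lie (act : L → B →+ B) (a : L) (x : Om L B) :
    lie act a (sg x) = sg (lie act a x) := by
  ext l
  induction l generalizing x with
  | nil => simp [lie_nil]
  | cons b l ih =>
    have e : sg (lie act a x) (b :: l) = io b (sg (lie act a x)) l := rfl
    rw [e, io_sg, io_lie, lie_cons, io_sg, io_sg, map_neg, neg_ap, ih]
    simp only [map_sub, neg_ap, sub_ap]; abel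

theorem sg_dd (act : L → B →+ B) (x : Om L B) :
    dd act (sg x) = - sg (dd act x) := by
  ext l
  induction l generalizing x with
  | nil => simp [dd_nil]
  | cons b l ih =>
    have e : (-sg (dd act x)) (b :: l) = (- io b (sg (dd act x))) l := rfl
    rw [e, io_sg, io_dd, dd_cons, io_sg, map_neg, neg_ap, ih, sg_lie]
    simp only [map_sub, neg_ap, sub_ap]; abel

theorem mp_lie (act : L → B →+ B) (act' : L → M →+ M) (f : B →+ M)
    (h : ∀ a x, f (act a x) = act' a (f x)) (a : L) (x : Om L B) :
    mp f (lie act a x) = lie act' a (mp f x) := by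
  ext l
  induction l generalizing x with
  | nil => simp [lie_nil, mp_ap, h]
  | cons b l ih =>
    rw [lie_cons, io_mp, ← ih]
    simp [mp_ap, lie_cons]

theorem mp_dd (act : L → B →+ B) (act' : L → M →+ M) (f : B →+ M)
    (h : ∀ a x, f (act a x) = act' a (f x)) (x : Om L B) :
    mp f (dd act x) = dd act' (mp f x) := by
  ext l
  induction l generalizing x with
  | nil => simp [dd_nil, mp_ap]
  | cons b l ih =>
    rw [dd_cons, io_mp, ← ih, ← mp_lie act act' f h]
    simp [mp_ap, dd_cons]

theorem dd_of0 (act : L → B →+ B) (c : B) : dd act (of0 c) = of1 (fun a => act a c) := by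
  have : ∀ a, lie act a (of0 c) = of0 (act a c) := by
    intro a
    apply ext_io <;> simp [lie_nil, io_lie]
  apply ext_io
  · rfl
  · intro a; simp [io_dd, this]

theorem lie_of0 (act : L → B →+ B) (a : L) (c : B) : lie act a (of0 c) = of0 (act a c) := by
  apply ext_io <;> simp [lie_nil, io_lie]

theorem lie_of1 (act : L → B →+ B) (a : L) (α : L → B) :
    lie act a (of1 α) = of1 (fun b => act a (α b) - α ⁅a, b⁆) := by
  apply ext_io <;> simp [lie_nil, io_lie, lie_of0, of0_sub]

theorem io_dd_of1 (act : L → B →+ B) (a : L) (α : L → B) :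
    io a (dd act (of1 α)) = of1 (fun b => act a (α b) - α ⁅a, b⁆ - act b (α a)) := by
  rw [io_dd, lie_of1, io_of1, dd_of0, ← of1_sub]

theorem dd_dd_of1 (act : L → B →+ B) (hact : ∀ a b x, act ⁅a, b⁆ x = act a (act b x) - act b (act a x))
    (α : L →+ B) : dd act (dd act (of1 α)) = 0 := by
  apply ext_io
  · rfl
  intro a
  rw [io_dd, io_dd_of1]
  apply ext_io
  · simp [lie_nil, dd_nil]
  intro b
  rw [map_sub, io_lie, io_dd_of1, io_dd_of1, lie_of1, io_dd_of1, ← of1_sub, ← of1_sub, map_zero,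
    map_zero]
  apply ext_io
  · rfl
  intro c
  simp only [io_of1, map_zero]
  convert of0_zero (L := L) (B := B)
  simp only [map_sub, hact, lie_lie]
  rw [leibniz_lie a b c]
  simp only [map_add]
  abel

end

section
variable [Ring B]

theorem lie_mul (act : L → B →+ B) (hder : ∀ a x y, act a (x * y) = act a x * y + x * act a y)
    (a : L) (x y : Om L B) :
    lie act a (x * y) = lie act a x * y + x * lie act a y := by
  ext l
  induction l generalizing x y with
  | nil => simp [lie_nil, mul_nil, hder]
  | cons b l ih =>
    simp only [lie_cons, io_mul, map_add, ih, add_ap, mul_cons, sg_lie, io_lie, sub_ap, sub_mul,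
      mul_sub]
    abel

theorem dd_mul (act : L → B →+ B) (hder : ∀ a x y, act a (x * y) = act a x * y + x * act a y)
    (x y : Om L B) :
    dd act (x * y) = dd act x * y + sg x * dd act y := by
  ext l
  induction l generalizing x y with
  | nil => simp [dd_nil, mul_nil]
  | cons b l ih =>
    simp only [dd_cons, io_mul, map_add, ih, add_ap, mul_cons, lie_mul act hder, io_dd, sub_ap,
      sub_mul, mul_sub, io_sg, neg_mul, sg_dd, neg_ap, sg_sg]
    abel

end
end diff
end Om


namespace Om
section calc1
variable {L B M : Type*} [LieRing L] [Ring B] [AddCommGroup M]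

/-- curvature of `act + α` -/
def cur (act : L → B →+ B) (α : L → B) : Om L B := dd act (of1 α) + of1 α * of1 α

/-- covariant differential -/
def nab (act : L → B →+ B) (α : L → B) (x : Om L B) : Om L B :=
  dd act x + of1 α * x - sg x * of1 α

theorem sg_cur (act : L → B →+ B) (α : L → B) : sg (cur act α) = cur act α := by
  have := sg_dd act (of1 α)
  rw [sg_of1, map_neg] at this
  rw [cur, map_add, sg_mul, sg_of1, ← neg_injective this]
  simp

theorem nab_cur (act : L → B →+ B) (hder : ∀ a x y, act a (x * y) = act a x * y + x * act a y)
    (hact : ∀ a b x, act ⁅a, b⁆ x = act a (act b x) - act b (act a x)) (α : L →+ B) :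
    nab act α (cur act α) = 0 := by
  rw [nab, sg_cur]
  simp only [cur, map_add, dd_mul act hder, dd_dd_of1 act hact, sg_of1]
  noncomm_ring

theorem nab_mul (act : L → B →+ B) (hder : ∀ a x y, act a (x * y) = act a x * y + x * act a y)
    (α : L → B) (x y : Om L B) :
    nab act α (x * y) = nab act α x * y + sg x * nab act α y := by
  simp only [nab, dd_mul act hder, sg_mul]
  noncomm_ring

theorem nab_add (act : L → B →+ B) (α : L → B) (x y : Om L B) :
    nab act α (x + y) = nab act α x + nab act α y := by
  simp only [nab, map_add]
  noncomm_ring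

theorem nab_one (act : L → B →+ B) (hder : ∀ a x y, act a (x * y) = act a x * y + x * act a y)
    (α : L → B) : nab act α 1 = 0 := by
  have := nab_mul act hder α 1 1
  rw [sg_one] at this
  simpa using this

theorem nab_cur_pow (act : L → B →+ B)
    (hder : ∀ a x y, act a (x * y) = act a x * y + x * act a y)
    (hact : ∀ a b x, act ⁅a, b⁆ x = act a (act b x) - act b (act a x)) (α : L →+ B) (n : ℕ) :
    nab act α (cur act α ^ n) = 0 := by
  induction n with
  | zero => rw [pow_zero, nab_one act hder]
  | succ n ih => rw [pow_succ, nab_mul act hder, ih, nab_cur act hder hact]; simp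

theorem dd_tr (act : L → B →+ B) (act' : L → M →+ M) (tr : B →+ M)
    (htr : ∀ x y, tr (x * y) = tr (y * x)) (htra : ∀ a x, tr (act a x) = act' a (tr x))
    (α : L → B) (x : Om L B) :
    dd act' (mp tr x) = mp tr (nab act α x) := by
  rw [nab, map_sub, map_add, tr_odd tr htr (sg_of1 α), ← mp_dd act act' tr htra]
  abel

/-- `Σ Rⁱ w Rʲ` -/
def qq (R : Om L B) (n : ℕ) (w : Om L B) : Om L B := ∑ i ∈ Finset.range n, R ^ i * w * R ^ (n - 1 - i)

theorem qq_succ (R : Om L B) (n : ℕ) (w : Om L B) : qq R (n + 1) w = qq R n w * R + R ^ n * w := by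
  rw [qq, Finset.sum_range_succ, qq, Finset.sum_mul]
  congr 1
  · apply Finset.sum_congr rfl
    intro i hi
    have : i < n := Finset.mem_range.mp hi
    rw [mul_assoc _ _ R, ← pow_succ]
    congr 2; omega
  · simp

theorem der_pow (f : Om L B →+ Om L B) (hf : ∀ x y, f (x * y) = f x * y + x * f y) (R : Om L B)
    (n : ℕ) : f (R ^ n) = qq R n (f R) := by
  induction n with
  | zero =>
    have := hf 1 1
    simp at this
    simp [qq, this]
  | succ n ih => rw [qq_succ, pow_succ, hf, ih]

theorem nab_qq (act : L → B →+ B)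
    (hder : ∀ a x y, act a (x * y) = act a x * y + x * act a y)
    (hact : ∀ a b x, act ⁅a, b⁆ x = act a (act b x) - act b (act a x)) (α : L →+ B) (n : ℕ)
    (w : Om L B) :
    nab act α (qq (cur act α) n w) = qq (cur act α) n (nab act α w) := by
  induction n with
  | zero => simp [qq, nab]
  | succ n ih =>
    rw [qq_succ, qq_succ, nab_add, nab_mul act hder, nab_mul act hder, ih, nab_cur act hder hact,
      nab_cur_pow act hder hact, sg_pow (sg_cur act α)]
    simp

theorem tr_qq (tr : B →+ M)
    (htr : ∀ x y, tr (x * y) = tr (y * x)) (R : Om L B) (hR : sg R = R) (n : ℕ) (x y : Om L B)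
    (hx : sg x = x) : mp tr (x * qq R n y) = mp tr (y * qq R n x) := by
  rw [qq, qq, Finset.mul_sum, Finset.mul_sum, map_sum, map_sum, ← Finset.sum_range_reflect]
  apply Finset.sum_congr rfl
  intro i hi
  have hi' : i < n := Finset.mem_range.mp hi
  have e : n - 1 - (n - 1 - i) = i := by omega
  rw [e]
  have h1 : sg (x * R ^ (n - 1 - i)) = x * R ^ (n - 1 - i) := by rw [sg_mul, hx, sg_pow hR]
  have := tr_even tr htr h1 (y * R ^ i)
  simp only [mul_assoc] at this ⊢
  exact this

/-- derivative of the curvature -/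
theorem der_cur (act : L → B →+ B) (α : L → B) (f : B →+ B)
    (hf : ∀ x y, f (x * y) = f x * y + x * f y) (hfa : ∀ a x, f (act a x) = act a (f x)) :
    mp f (cur act α) = nab act α (of1 (fun a => f (α a))) := by
  rw [cur, nab, map_add, mp_der f hf, mp_dd act act f hfa, mp_of1, sg_of1]
  noncomm_ring

theorem sg_nab_of1 (act : L → B →+ B) (α β : L → B) :
    sg (nab act α (of1 β)) = nab act α (of1 β) := by
  have := sg_dd act (of1 β)
  rw [sg_of1, map_neg] at this
  simp only [nab, map_sub, map_add, sg_mul, sg_of1, ← neg_injective this]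
  simp

/-- first transgression formula -/
theorem trans1 (act : L → B →+ B) (act' : L → M →+ M) (tr : B →+ M)
    (htr : ∀ x y, tr (x * y) = tr (y * x)) (htra : ∀ a x, tr (act a x) = act' a (tr x))
    (hder : ∀ a x y, act a (x * y) = act a x * y + x * act a y)
    (hact : ∀ a b x, act ⁅a, b⁆ x = act a (act b x) - act b (act a x)) (α : L →+ B)
    (f : B →+ B) (f' : M →+ M)
    (hf : ∀ x y, f (x * y) = f x * y + x * f y) (hfa : ∀ a x, f (act a x) = act a (f x))
    (hft : ∀ x, tr (f x) = f' (tr x)) (n : ℕ) :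
    mp f' (mp tr (cur act α ^ (n + 1))) =
      (n + 1) • dd act' (mp tr (of1 (fun a => f (α a)) * cur act α ^ n)) := by
  have e1 : mp f' (mp tr (cur act α ^ (n + 1))) = mp tr (mp f (cur act α ^ (n + 1))) := by
    ext l; simp [mp_ap, hft]
  rw [e1, der_pow (mp f) (mp_der f hf), der_cur act α f hf hfa, dd_tr act act' tr htr htra α,
    nab_mul act hder, nab_cur_pow act hder hact]
  set w := nab act α (of1 (fun a => f (α a))) with hw
  rw [mul_zero, add_zero, qq, map_sum]
  rw [Finset.sum_congr rfl (g := fun _ => mp tr (w * cur act α ^ n))]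
  · simp
  intro i hi
  have hi' : i < n + 1 := Finset.mem_range.mp hi
  rw [mul_assoc, tr_even tr htr (sg_pow (sg_cur act α) i), mul_assoc, ← pow_add]
  congr 3; omega

/-- second transgression formula -/
theorem trans2 (act : L → B →+ B) (act' : L → M →+ M) (tr : B →+ M)
    (htr : ∀ x y, tr (x * y) = tr (y * x)) (htra : ∀ a x, tr (act a x) = act' a (tr x))
    (hder : ∀ a x y, act a (x * y) = act a x * y + x * act a y)
    (hact : ∀ a b x, act ⁅a, b⁆ x = act a (act b x) - act b (act a x)) (α : L →+ B)
    (f : B →+ B) (f' : M →+ M)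
    (hf : ∀ x y, f (x * y) = f x * y + x * f y) (hfa : ∀ a x, f (act a x) = act a (f x))
    (hft : ∀ x, tr (f x) = f' (tr x))
    (g : B →+ B) (g' : M →+ M)
    (hg : ∀ x y, g (x * y) = g x * y + x * g y) (hga : ∀ a x, g (act a x) = act a (g x))
    (hgt : ∀ x, tr (g x) = g' (tr x)) (hfg : ∀ x, f (g x) = g (f x)) (n : ℕ) :
    dd act' (mp tr (of1 (fun a => f (α a)) * qq (cur act α) n (of1 (fun a => g (α a))))) =
      mp f' (mp tr (of1 (fun a => g (α a)) * cur act α ^ n)) -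
      mp g' (mp tr (of1 (fun a => f (α a)) * cur act α ^ n)) := by
  have e1 : ∀ x : Om L B, mp f' (mp tr x) = mp tr (mp f x) := by
    intro x; ext l; simp [mp_ap, hft]
  have e2 : ∀ x : Om L B, mp g' (mp tr x) = mp tr (mp g x) := by
    intro x; ext l; simp [mp_ap, hgt]
  rw [e1, e2, mp_der f hf, mp_der g hg, der_pow (mp f) (mp_der f hf), der_pow (mp g) (mp_der g hg),
    der_cur act α f hf hfa, der_cur act α g hg hga, dd_tr act act' tr htr htra α,
    nab_mul act hder, nab_qq act hder hact, sg_of1, mp_of1, mp_of1, map_add, map_add, map_add,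
    tr_qq tr htr _ (sg_cur act α) n _ _ (sg_nab_of1 _ _ _)]
  simp only [hfg, neg_mul, map_neg]
  abel

/-- naturality of curvature -/
theorem mp_cur {B' : Type*} [Ring B'] (act : L → B →+ B) (act' : L → B' →+ B') (f : B →+ B')
    (hf : ∀ x y, f (x * y) = f x * f y) (h : ∀ a x, f (act a x) = act' a (f x)) (α : L → B) :
    mp f (cur act α) = cur act' (fun a => f (α a)) := by
  rw [cur, cur, map_add, mp_mul f hf, mp_dd act act' f h, mp_of1]

end calc1

section alt
variable {L B : Type*}

section
variable [AddCommGroup B]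

/-- antisymmetric (adjacent swaps) -/
def Anti (x : Om L B) : Prop := ∀ l₁ a b l₂, x (l₁ ++ a :: b :: l₂) = - x (l₁ ++ b :: a :: l₂)

theorem Anti.io {x : Om L B} (h : Anti x) (c : L) : Anti (io c x) := fun l₁ a b l₂ => h (c :: l₁) a b l₂

theorem Anti.io_io {x : Om L B} (h : Anti x) (a b : L) : Om.io a (Om.io b x) = - Om.io b (Om.io a x) := by
  ext l; exact h [] b a l

theorem anti_iff (x : Om L B) : Anti x ↔
    (∀ a b, Om.io a (Om.io b x) = - Om.io b (Om.io a x)) ∧ ∀ c, Anti (Om.io c x) := by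
  constructor
  · intro h; exact ⟨h.io_io, h.io⟩
  · rintro ⟨h1, h2⟩ l₁ a b l₂
    cases l₁ with
    | nil => exact congrFun (h1 b a) l₂
    | cons c l => exact h2 c l a b l₂

theorem Anti.add {x y : Om L B} (hx : Anti x) (hy : Anti y) : Anti (x + y) := by
  intro l₁ a b l₂
  rw [add_ap, add_ap, hx, hy]; abel

theorem Anti.mp {B' : Type*} [AddCommGroup B'] {x : Om L B} (hx : Anti x) (f : B →+ B') : Anti (mp f x) := by
  intro l₁ a b l₂
  rw [mp_ap, mp_ap, hx, map_neg]

theorem Anti.sg {x : Om L B} (hx : Anti x) : Anti (sg x) := by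
  intro l₁ a b l₂
  rw [sg_ap, sg_ap, hx]; simp

theorem anti_zero : Anti (0 : Om L B) := by intro l₁ a b l₂; simp

theorem anti_of0 (c : B) : Anti (of0 (L := L) c) := by
  rw [anti_iff]; simp [anti_zero]

theorem anti_of1 (c : L → B) : Anti (of1 c) := by
  rw [anti_iff]; simp [anti_of0]

theorem anti_sum {ι : Type*} (s : Finset ι) (f : ι → Om L B) (h : ∀ i ∈ s, Anti (f i)) :
    Anti (∑ i ∈ s, f i) := by
  intro l₁ a b l₂
  rw [sum_ap, sum_ap, ← Finset.sum_neg_distrib]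
  exact Finset.sum_congr rfl fun i hi => h i hi _ _ _ _

/-- supported in degree `n` -/
def Deg (n : ℕ) (x : Om L B) : Prop := ∀ l, l.length ≠ n → x l = 0

theorem Deg.io {n : ℕ} {x : Om L B} (h : Deg (n + 1) x) (a : L) : Deg n (io a x) := by
  intro l hl; apply h; simpa using hl

theorem Deg.sg {n : ℕ} {x : Om L B} (h : Deg n x) : Deg n (sg x) := by
  intro l hl; rw [sg_ap, h l hl, smul_zero]

theorem deg_zero {x : Om L B} (h : Deg 0 x) : x = of0 (x []) := by
  ext l
  cases l with
  | nil => rfl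
  | cons a l => exact h _ (by simp)

theorem deg_of0 (c : B) : Deg 0 (of0 (L := L) c) := by
  intro l hl
  cases l with
  | nil => simp at hl
  | cons a l => rfl

theorem deg_of1 (c : L → B) : Deg 1 (of1 c) := by
  intro l hl
  cases l with
  | nil => rfl
  | cons a l => exact deg_of0 _ l (by simpa using hl)

theorem Deg.add {n : ℕ} {x y : Om L B} (hx : Deg n x) (hy : Deg n y) : Deg n (x + y) := by
  intro l hl
  rw [add_ap, hx l hl, hy l hl, add_zero]

end

section
variable [Ring B]

theorem Anti.mul {x y : Om L B} (hx : Anti x) (hy : Anti y) : Anti (x * y) := by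
  intro l₁ a b l₂
  induction l₁ generalizing x y with
  | nil =>
    have : Om.io b (Om.io a (x * y)) = - Om.io a (Om.io b (x * y)) := by
      simp only [io_mul, map_add, hx.io_io b a, hy.io_io b a, io_sg, sg_sg]
      noncomm_ring
    exact congrFun this l₂
  | cons c l ih =>
    simp only [List.cons_append, mul_cons]
    rw [ih (hx.io c) hy, ih hx.sg (hy.io c)]; abel

theorem deg_mul_aux (l : List L) : ∀ (m n : ℕ) (x y : Om L B), Deg m x → Deg n y →
    l.length ≠ m + n → (x * y) l = 0 := by
  induction l with
  | nil =>
    intro m n x y hx hy h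
    rw [mul_nil]
    by_cases hm : m = 0
    · rw [hy [] (by simp at h ⊢; omega), mul_zero]
    · rw [hx [] (by simp at h ⊢; omega), zero_mul]
  | cons a l ih =>
    intro m n x y hx hy h
    rw [mul_cons]
    have h1 : (io a x * y) l = 0 := by
      cases m with
      | zero => rw [deg_zero hx, io_of0, zero_mul]; rfl
      | succ m => exact ih m n _ _ (hx.io a) hy (by simp at h; omega)
    have h2 : (sg x * io a y) l = 0 := by
      cases n with
      | zero => rw [deg_zero hy, io_of0, mul_zero]; rfl
      | succ n => exact ih m n _ _ hx.sg (hy.io a) (by simp at h; omega)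
    rw [h1, h2, add_zero]

theorem Deg.mul {m n : ℕ} {x y : Om L B} (hx : Deg m x) (hy : Deg n y) : Deg (m + n) (x * y) :=
  fun l hl => deg_mul_aux l m n x y hx hy hl

theorem Anti.pow {x : Om L B} (hx : Anti x) (n : ℕ) : Anti (x ^ n) := by
  induction n with
  | zero => rw [pow_zero]; exact anti_of0 1
  | succ n ih => rw [pow_succ]; exact ih.mul hx

theorem deg_pow {k : ℕ} {x : Om L B} (hx : Deg k x) (n : ℕ) : Deg (k * n) (x ^ n) := by
  induction n with
  | zero => rw [pow_zero]; exact deg_of0 1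
  | succ n ih => rw [pow_succ]; exact ih.mul hx

end

section
variable [LieRing L] [Ring B]

theorem anti_cur (act : L → B →+ B) (α : L →+ B) : Anti (cur act α) := by
  refine Anti.add ?_ ((anti_of1 _).mul (anti_of1 _))
  rw [anti_iff]
  constructor
  · intro a b
    rw [io_dd_of1, io_dd_of1, io_of1, io_of1]
    have hab : α ⁅a, b⁆ = - α ⁅b, a⁆ := by rw [← lie_skew a b, map_neg]
    apply ext_io
    · simp only [of0_nil, neg_ap, hab]; abel
    · simp
  · intro c; rw [io_dd_of1]; exact anti_of1 _

theorem deg_cur (act : L → B →+ B) (α : L → B) : Deg 2 (cur act α) := by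
  refine Deg.add ?_ ((deg_of1 _).mul (deg_of1 _))
  intro l hl
  cases l with
  | nil => rfl
  | cons a l =>
    have : dd act (of1 α) (a :: l) = io a (dd act (of1 α)) l := rfl
    rw [this, io_dd_of1]
    exact deg_of1 _ l (by simpa using hl)

theorem Anti.qq {R w : Om L B} (hR : Anti R) (hw : Anti w) (n : ℕ) : Anti (qq R n w) :=
  anti_sum _ _ fun i _ => ((hR.pow i).mul hw).mul (hR.pow _)

end
end alt
end Om


namespace Om
section altern
variable {L B : Type*}

section
variable [AddCommGroup B]

/-- `K G (a₁…aₙ) = Σ (-1)ⁱ G(aᵢ)(…âᵢ…)` -/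
def kkAux : List L → (L → Om L B) → B
  | [], _ => 0
  | a :: l, G => G a l - kkAux l (fun b => io a (G b))

/-- `K G (a₁…aₙ) = Σ (-1)ⁱ G(aᵢ)(…âᵢ…)` -/
def kk (G : L → Om L B) : Om L B := fun l => kkAux l G

theorem kk_nil (G : L → Om L B) : kk G [] = 0 := rfl
theorem kk_cons (G : L → Om L B) (a : L) (l : List L) :
    kk G (a :: l) = G a l - kk (fun b => io a (G b)) l := rfl
theorem io_kk (G : L → Om L B) (a : L) :
    io a (kk G) = G a - kk (fun b => io a (G b)) := rfl

theorem kk_ofFn (n : ℕ) (G : L → Om L B) (a : Fin (n + 1) → L) :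
    kk G (List.ofFn a) =
      ∑ i : Fin (n + 1), (-1 : ℤ) ^ (i : ℕ) • G (a i) (List.ofFn fun k => a (i.succAbove k)) := by
  induction n generalizing G with
  | zero => simp [kk_cons, kk_nil]
  | succ n ih =>
    rw [List.ofFn_succ, kk_cons, ih, Fin.sum_univ_succ (n := n + 1), sub_eq_add_neg, ← Finset.sum_neg_distrib]
    congr 1
    · simp
    · apply Finset.sum_congr rfl
      intro i _
      rw [List.ofFn_succ (n := n)]
      simp [pow_succ]

theorem kk_add_ap (l : List L) (G H : L → Om L B) :
    kk (fun b => G b + H b) l = kk G l + kk H l := by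
  induction l generalizing G H with
  | nil => simp [kk_nil]
  | cons a l ih => simp only [kk_cons, map_add, ih, add_ap]; abel

theorem kk_neg_ap (l : List L) (G : L → Om L B) :
    kk (fun b => - G b) l = - kk G l := by
  induction l generalizing G with
  | nil => simp [kk_nil]
  | cons a l ih => simp only [kk_cons, map_neg, ih, neg_ap]; abel

theorem kk_nsmul_ap (n : ℕ) (l : List L) (G : L → Om L B) :
    kk (fun b => n • G b) l = n • kk G l := by
  induction l generalizing G with
  | nil => simp [kk_nil]
  | cons a l ih => simp only [kk_cons, map_nsmul, ih, nsmul_ap, nsmul_sub]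

theorem kk_sg_ap (l : List L) (G : L → Om L B) :
    kk (fun b => sg (G b)) l = - sg (kk G) l := by
  induction l generalizing G with
  | nil => simp [kk_nil]
  | cons a l ih =>
    have e : sg (kk G) (a :: l) = io a (sg (kk G)) l := rfl
    rw [e, io_sg, io_kk, kk_cons]
    simp only [io_sg, kk_neg_ap, ih, map_sub, neg_ap, sub_ap]; abel

/-- alternation of the first `m` slots -/
def altL : ℕ → Om L B → Om L B
  | 0, X => of0 (X [])
  | m + 1, X => kk (fun b => altL m (io b X))

theorem kk_anti_ap (m : ℕ) (x : Om L B) (hx : Anti x) (l : List L) (hl : l.length = m) :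
    kk (fun b => io b x) l = m • x l := by
  induction l generalizing x m with
  | nil => simp at hl; simp [kk_nil, ← hl]
  | cons a l ih =>
    obtain ⟨k, rfl⟩ : ∃ k, m = k + 1 := ⟨l.length, by simpa using hl.symm⟩
    rw [kk_cons]
    simp only [hx.io_io a, kk_neg_ap]
    rw [ih k (io a x) (hx.io a) (by simpa using hl)]
    simp [succ_nsmul']

theorem altL_anti (m : ℕ) (x : Om L B) (hx : Anti x) (hd : Deg m x) :
    altL m x = m.factorial • x := by
  induction m generalizing x with
  | zero => simp [altL, ← deg_zero hd]
  | succ m ih =>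
    ext l
    have e : altL (m + 1) x l = kk (fun b => m.factorial • io b x) l := by
      rw [altL]
      congr 2
      ext b : 1
      exact ih _ (hx.io b) (hd.io b)
    rw [e, kk_nsmul_ap, nsmul_ap]
    by_cases hl : l.length = m + 1
    · rw [kk_anti_ap (m + 1) x hx l hl, smul_smul, Nat.factorial_succ, mul_comm]
    · rw [hd l hl, smul_zero]
      have : ∀ (l : List L) (m : ℕ) (x : Om L B), Deg (m + 1) x → l.length ≠ m + 1 →
          kk (fun b => io b x) l = 0 := by
        intro l
        induction l with
        | nil => intros; rfl
        | cons a l ih' =>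
          intro m x hd hl
          rw [kk_cons, io_ap, hd _ hl, zero_sub, neg_eq_zero]
          clear ih
          have key : ∀ (l : List L) (x : L → Om L B) (m : ℕ), (∀ b, Deg m (x b)) → l.length ≠ m + 1 →
              kk x l = 0 := by
            intro l
            induction l with
            | nil => intros; rfl
            | cons a l ih =>
              intro x m hd hl
              rw [kk_cons, hd a l (by simpa using hl)]
              cases m with
              | zero =>
                have : (fun b => io a (x b)) = fun b => (0 : Om L B) := by
                  ext b : 1; rw [deg_zero (hd b), io_of0]
                rw [this]
                have h0 := kk_add_ap l (fun _ : L => (0 : Om L B)) (fun _ => 0)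
                simp at h0
                simp [h0]
              | succ m =>
                rw [ih _ m (fun b => (hd b).io a) (by simpa using hl), sub_zero]
          cases m with
          | zero =>
            have : (fun b => io a (io b x)) = fun b => (0 : Om L B) := by
              ext b : 1; rw [deg_zero (hd.io b), io_of0]
            rw [this]
            have h0 := kk_add_ap l (fun _ : L => (0 : Om L B)) (fun _ => 0)
            simpa using h0
          | succ m =>
            exact key l _ m (fun b => (hd.io b).io a) (by simpa using hl)
      rw [this l m x hd hl, smul_zero]

/-- adjoining a first letter -/
def insPerm {n : ℕ} (q : Fin (n + 1) × Equiv.Perm (Fin n)) : Equiv.Perm (Fin (n + 1)) :=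
  (Fin.cycleRange q.1)⁻¹ * Equiv.Perm.decomposeFin.symm (0, q.2)

theorem insPerm_zero {n : ℕ} (q : Fin (n + 1) × Equiv.Perm (Fin n)) : insPerm q 0 = q.1 := by
  simp [insPerm, Equiv.Perm.inv_def]

theorem insPerm_succ {n : ℕ} (q : Fin (n + 1) × Equiv.Perm (Fin n)) (k : Fin n) :
    insPerm q k.succ = q.1.succAbove (q.2 k) := by
  simp [insPerm, Equiv.Perm.inv_def]

theorem insPerm_sign {n : ℕ} (q : Fin (n + 1) × Equiv.Perm (Fin n)) :
    (Equiv.Perm.sign (insPerm q) : ℤ) = (-1) ^ (q.1 : ℕ) * (Equiv.Perm.sign q.2 : ℤ) := by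
  simp [insPerm, Fin.sign_cycleRange]

theorem insPerm_bij {n : ℕ} : Function.Bijective (insPerm (n := n)) := by
  rw [Fintype.bijective_iff_injective_and_card]
  constructor
  · intro q q' h
    have h0 : q.1 = q'.1 := by rw [← insPerm_zero q, h, insPerm_zero]
    refine Prod.ext h0 ?_
    ext k : 1
    have := insPerm_succ q k
    rw [h, insPerm_succ, h0] at this
    exact (Fin.succAbove_right_injective this).symm
  · simp [Fintype.card_perm, Nat.factorial_succ]

theorem altL_ofFn (m : ℕ) (X : Om L B) (a : Fin m → L) :
    altL m X (List.ofFn a) =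
      ∑ τ : Equiv.Perm (Fin m), (Equiv.Perm.sign τ : ℤ) • X (List.ofFn fun i => a (τ i)) := by
  induction m generalizing X with
  | zero => simp [altL]
  | succ m ih =>
    rw [altL, kk_ofFn, ← (insPerm_bij (n := m)).sum_comp, Fintype.sum_prod_type]
    apply Finset.sum_congr rfl
    intro i _
    rw [ih, Finset.smul_sum]
    apply Finset.sum_congr rfl
    intro σ _
    rw [insPerm_sign, List.ofFn_succ (n := m)]
    simp only [insPerm_zero, insPerm_succ, io_ap, smul_smul]

/-- Lie bracket sum -/
theorem kk_lie [LieRing L] (act : L → B →+ B) (a : L) (x : Om L B) (hx : Anti x) (l : List L) :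
    lie act a x l = act a (x l) - kk (fun b => io ⁅a, b⁆ x) l := by
  induction l generalizing x with
  | nil => simp [lie_nil, kk_nil]
  | cons b l ih =>
    rw [lie_cons, kk_cons, ih _ (hx.io b)]
    simp only [hx.io_io b, kk_neg_ap, io_ap]
    abel

theorem dGen_eq_succ [LieRing L] (act : L → B →+ B) (m : ℕ) (x : Om L B) (hx : Anti x)
    (a : Fin (m + 2) → L) :
    dGen (fun a c => act a c) (n := m + 1) (fun v : Fin (m + 1) → L => x (List.ofFn v)) a
      = dd act x (List.ofFn a) := by
  induction m generalizing x with
  | zero =>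
    simp [dGen, Fin.sum_univ_succ, dd_cons, dd_nil, lie_cons, lie_nil]
    abel
  | succ m ih =>
    rw [List.ofFn_succ, dd_cons, ← ih _ (hx.io _), kk_lie act _ x hx, kk_ofFn]
    rw [dGen, dGen]
    rw [Fin.sum_univ_succ (n := m + 2)]
    rw [Fin.sum_univ_succ (n := m + 2) (f := fun i : Fin (m + 1 + 2) => ∑ j : Fin (m + 1 + 2), _)]
    have h1 : ∀ i : Fin (m + 2), (-1 : ℤ) ^ (i.succ : ℕ) • act (a i.succ)
          (x (List.ofFn fun k : Fin (m + 2) => a (i.succ.succAbove k))) =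
        - ((-1 : ℤ) ^ (i : ℕ) • act (a i.succ)
          (io (a 0) x (List.ofFn fun k : Fin (m + 1) => a (i.succAbove k).succ))) := by
      intro i
      rw [List.ofFn_succ (n := m + 1)]
      simp [pow_succ]
    have h3 : ∀ (i j : Fin (m + 2)) (h : (i : ℕ) < (j : ℕ)),
        (-1 : ℤ) ^ ((i.succ : ℕ) + (j.succ : ℕ)) • x (List.ofFn (Fin.cons ⁅a i.succ, a j.succ⁆
            (fun k : Fin (m + 1) => a (j.succ.succAbove
              ((⟨(i.succ : ℕ), by have := j.isLt; simp; omega⟩ : Fin (m + 1 + 1)).succAbove k))) :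
                Fin (m + 2) → L)) =
        - ((-1 : ℤ) ^ ((i : ℕ) + (j : ℕ)) • io (a 0) x (List.ofFn (Fin.cons ⁅a i.succ, a j.succ⁆
            (fun k : Fin m => a (j.succAbove
              ((⟨(i : ℕ), by have := j.isLt; omega⟩ : Fin (m + 1)).succAbove k)).succ) :
                Fin (m + 1) → L))) := by
      intro i j h
      have e : (⟨(i.succ : ℕ), by have := j.isLt; simp; omega⟩ : Fin (m + 1 + 1)) =
        (⟨(i : ℕ), by have := j.isLt; omega⟩ : Fin (m + 1)).succ := rfl
      rw [e, List.ofFn_cons, List.ofFn_cons, List.ofFn_succ]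
      have := congrFun (hx.io_io (a 0) ⁅a i.succ, a j.succ⁆)
      simp only [io_ap, neg_ap] at this
      simp only [Fin.succ_succAbove_zero, Fin.succ_succAbove_succ, io_ap]
      rw [this, smul_neg, Fin.val_succ, Fin.val_succ]
      congr 2
      ring
    have h4 : (∑ j : Fin (m + 1 + 2), if h : ((0 : Fin (m + 3)) : ℕ) < (j : ℕ) then
          (-1 : ℤ) ^ (((0 : Fin (m + 3)) : ℕ) + (j : ℕ)) • x (List.ofFn (Fin.cons ⁅a 0, a j⁆
            (fun k : Fin (m + 1) => a (j.succAbove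
              ((⟨((0 : Fin (m + 3)) : ℕ), by have := j.isLt; omega⟩ : Fin (m + 1 + 1)).succAbove k))) :
                Fin (m + 2) → L))
        else 0) = - ∑ i : Fin (m + 2), (-1 : ℤ) ^ (i : ℕ) •
          io ⁅a 0, a i.succ⁆ x (List.ofFn fun k : Fin (m + 1) => a (i.succAbove k).succ) := by
      rw [Fin.sum_univ_succ (n := m + 2), dif_neg (by simp), zero_add, ← Finset.sum_neg_distrib]
      apply Finset.sum_congr rfl
      intro j _
      rw [dif_pos (by simp), List.ofFn_cons]
      have e : (⟨((0 : Fin (m + 3)) : ℕ), by have := j.isLt; simp⟩ : Fin (m + 1 + 1)) = 0 := rfl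
      rw [e]
      simp [pow_succ]
    rw [h4]
    simp only [h1]
    rw [Finset.sum_neg_distrib]
    have h5 : (∑ i : Fin (m + 2), ∑ j : Fin (m + 1 + 2), if h : ((i.succ : Fin (m + 3)) : ℕ) < (j : ℕ) then
          (-1 : ℤ) ^ (((i.succ : Fin (m + 3)) : ℕ) + (j : ℕ)) • x (List.ofFn (Fin.cons ⁅a i.succ, a j⁆
            (fun k : Fin (m + 1) => a (j.succAbove
              ((⟨((i.succ : Fin (m + 3)) : ℕ), by have := j.isLt; omega⟩ : Fin (m + 1 + 1)).succAbove k))) :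
                Fin (m + 2) → L))
        else 0) = - ∑ i : Fin (m + 2), ∑ j : Fin (m + 2), if h : (i : ℕ) < (j : ℕ) then
          ((-1 : ℤ) ^ ((i : ℕ) + (j : ℕ)) • io (a 0) x (List.ofFn (Fin.cons ⁅a i.succ, a j.succ⁆
            (fun k : Fin m => a (j.succAbove
              ((⟨(i : ℕ), by have := j.isLt; omega⟩ : Fin (m + 1)).succAbove k)).succ) :
                Fin (m + 1) → L))) else 0 := by
      rw [← Finset.sum_neg_distrib]
      apply Finset.sum_congr rfl
      intro i _
      rw [Fin.sum_univ_succ (n := m + 2), dif_neg (by simp), zero_add, ← Finset.sum_neg_distrib]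
      apply Finset.sum_congr rfl
      intro j _
      by_cases h : (i : ℕ) < (j : ℕ)
      · rw [dif_pos h, dif_pos (by simpa using h), h3 i j h]
      · rw [dif_neg h, dif_neg (by simpa using h), neg_zero]
    rw [h5]
    simp only [Fin.val_zero, pow_zero, one_smul, Fin.zero_succAbove]
    abel

theorem dGen_eq [LieRing L] (act : L → B →+ B) (m : ℕ) (x : Om L B) (hx : Anti x)
    (a : Fin (m + 1) → L) :
    dGen (fun a c => act a c) (n := m) (fun v : Fin m → L => x (List.ofFn v)) a
      = dd act x (List.ofFn a) := by
  cases m with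
  | zero => simp [dGen, dd_cons, dd_nil, lie_nil]
  | succ m => exact dGen_eq_succ act m x hx a

end

section
variable [Ring B]

theorem kk_mul_ap (l : List L) (G : L → Om L B) (y : Om L B) :
    kk (fun b => G b * y) l = (kk G * y) l := by
  induction l generalizing G y with
  | nil => simp [kk_nil, mul_nil]
  | cons a l ih =>
    have e : sg (kk G) = - kk (fun b => sg (G b)) := by
      ext l; rw [neg_ap, kk_sg_ap, neg_neg]
    rw [kk_cons, mul_cons, io_kk, e]
    simp only [io_mul, kk_add_ap, ih, sub_mul, neg_mul, sub_ap, neg_ap]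
    abel

/-- concatenation product -/
def tens (m : ℕ) (x y : Om L B) : Om L B := fun l => x (l.take m) * y (l.drop m)

theorem kk_smul_ap (l : List L) (c : B) (G : L → Om L B) :
    kk (fun b => of0 c * G b) l = c * kk G l := by
  induction l generalizing G with
  | nil => simp [kk_nil]
  | cons a l ih =>
    have : ∀ b, io a (of0 c * G b) = of0 c * io a (G b) := by
      intro b; rw [io_mul]; simp
    simp only [kk_cons, this, ih, of0_mul_ap, mul_sub]

theorem altL_smul (n : ℕ) (c : B) (y : Om L B) : altL n (of0 c * y) = of0 c * altL n y := by
  induction n generalizing y with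
  | zero =>
    apply ext_io
    · simp [altL, mul_nil]
    · intro a; simp [altL, io_mul]
  | succ n ih =>
    ext l
    have : ∀ b, io b (of0 c * y) = of0 c * io b y := by
      intro b; rw [io_mul]; simp
    rw [altL, of0_mul_ap, altL, ← kk_smul_ap]
    simp only [this, ih]

theorem altL_tens (m n : ℕ) (x y : Om L B) : altL (m + n) (tens m x y) = altL m x * altL n y := by
  induction m generalizing x with
  | zero =>
    have : tens 0 x y = of0 (x []) * y := by
      ext l; simp [tens, of0_mul_ap]
    rw [this, zero_add, altL_smul]; rfl
  | succ m ih =>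
    rw [Nat.succ_add]
    ext l
    rw [altL, altL, ← kk_mul_ap]
    simp only [← ih]
    rfl

theorem wedge_eq [Algebra ℝ B] (m n : ℕ) (x y : Om L B) (hx : Anti x) (hdx : Deg m x)
    (hy : Anti y) (hdy : Deg n y) (a : Fin (m + n) → L) :
    ((m.factorial * n.factorial : ℝ))⁻¹ •
    ∑ τ : Equiv.Perm (Fin (m + n)), ((Equiv.Perm.sign τ : ℤ) •
      (x (List.ofFn fun i => a (τ (Fin.castAdd n i))) * y (List.ofFn fun j => a (τ (Fin.natAdd m j)))))
    = (x * y) (List.ofFn a) := by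
  have h := altL_ofFn (m + n) (tens m x y) a
  rw [altL_tens, altL_anti m x hx hdx, altL_anti n y hy hdy] at h
  have e : ∀ τ : Equiv.Perm (Fin (m + n)), tens m x y (List.ofFn fun i => a (τ i)) =
      (x (List.ofFn fun i => a (τ (Fin.castAdd n i))) * y (List.ofFn fun j => a (τ (Fin.natAdd m j)))) := by
    intro τ
    rw [List.ofFn_add, tens, List.take_left' (by simp), List.drop_left' (by simp)]
    rfl
  simp only [e] at h
  rw [← h, smul_mul_assoc, mul_smul_comm, nsmul_ap, nsmul_ap]
  rw [← Nat.cast_smul_eq_nsmul ℝ, ← Nat.cast_smul_eq_nsmul ℝ, smul_smul, smul_smul]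
  rw [mul_assoc, inv_mul_cancel₀, one_smul]
  positivity

end
end altern
end Om


namespace Om
section lin
variable {L B B' : Type*} [AddCommGroup L] [Module ℝ L]

section
variable [AddCommGroup B] [Module ℝ B] [AddCommGroup B'] [Module ℝ B']

def Lin (x : Om L B) : Prop := ∀ l₁ l₂, IsLinearMap ℝ (fun a => x (l₁ ++ a :: l₂))

theorem Lin.io {x : Om L B} (h : Lin x) (a : L) : Lin (io a x) := fun l₁ l₂ => h (a :: l₁) l₂

theorem Lin.io_add {x : Om L B} (h : Lin x) (a b : L) : Om.io (a + b) x = Om.io a x + Om.io b x := by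
  ext l; exact (h [] l).map_add a b

theorem lin_of {x : Om L B} (h1 : ∀ l, IsLinearMap ℝ (fun a => x (a :: l)))
    (h2 : ∀ c, Lin (Om.io c x)) : Lin x := by
  intro l₁ l₂
  cases l₁ with
  | nil => exact h1 l₂
  | cons c l => exact h2 c l l₂

theorem isLin_add {f g : L → B} (hf : IsLinearMap ℝ f) (hg : IsLinearMap ℝ g) :
    IsLinearMap ℝ (fun a => f a + g a) :=
  ⟨fun a b => by rw [hf.map_add, hg.map_add]; abel, fun c a => by rw [hf.map_smul, hg.map_smul, smul_add]⟩

theorem Lin.add {x y : Om L B} (hx : Lin x) (hy : Lin y) : Lin (x + y) :=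
  fun l₁ l₂ => isLin_add (hx l₁ l₂) (hy l₁ l₂)

theorem Lin.mp {x : Om L B} (hx : Lin x) (f : B →ₗ[ℝ] B') : Lin (mp f.toAddMonoidHom x) :=
  fun l₁ l₂ => ⟨fun a b => by simp [mp_ap, (hx l₁ l₂).map_add],
    fun c a => by simp [mp_ap, (hx l₁ l₂).map_smul]⟩

theorem Lin.sg {x : Om L B} (hx : Lin x) : Lin (sg x) :=
  fun l₁ l₂ => ⟨fun a b => by simp [sg_ap, (hx l₁ l₂).map_add],
    fun c a => by
      have := (hx l₁ l₂).map_smul c a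
      simp only [sg_ap, List.length_append, List.length_cons] at this ⊢
      rw [this, smul_comm]⟩

theorem lin_zero : Lin (0 : Om L B) := fun l₁ l₂ => ⟨fun a b => by simp, fun c a => by simp⟩

theorem lin_of0 (c : B) : Lin (of0 (L := L) c) :=
  lin_of (fun l => ⟨fun a b => by simp [of0], fun c a => by simp [of0]⟩) (fun c => by
    rw [io_of0]; exact lin_zero)

theorem lin_of1 {α : L → B} (hα : IsLinearMap ℝ α) : Lin (of1 α) :=
  lin_of (fun l => by
    cases l with
    | nil => exact hα
    | cons b l => exact ⟨fun a b => by simp [of1, of0], fun c a => by simp [of1, of0]⟩)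
    (fun c => by rw [io_of1]; exact lin_of0 _)

theorem lin_sum {ι : Type*} (s : Finset ι) (f : ι → Om L B) (h : ∀ i ∈ s, Lin (f i)) :
    Lin (∑ i ∈ s, f i) := by
  classical
  induction s using Finset.induction_on with
  | empty => simpa using lin_zero
  | insert i s hi ih =>
    rw [Finset.sum_insert hi]
    exact (h i (Finset.mem_insert_self _ _)).add (ih fun j hj => h j (Finset.mem_insert_of_mem hj))

theorem ofFn_update {n : ℕ} (v : Fin n → L) [DecidableEq (Fin n)] (i : Fin n) (a : L) :
    List.ofFn (Function.update v i a) =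
      (List.ofFn v).take i ++ a :: (List.ofFn v).drop (i + 1) := by
  have : List.ofFn (Function.update v i a) = (List.ofFn v).set i a := by
    apply List.ext_getElem
    · simp
    · intro k h1 h2
      simp only [List.getElem_ofFn, List.getElem_set, Function.update_apply, Fin.ext_iff]
      by_cases h : k = (i : ℕ)
      · simp [h]
      · simp [h, Ne.symm h]
  rw [this, List.set_eq_take_append_cons_drop]
  simp

/-- multilinear map of a form -/
def toMul (n : ℕ) (x : Om L B) (hx : Lin x) : MultilinearMap ℝ (fun _ : Fin n => L) B where
  toFun v := x (List.ofFn v)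
  map_update_add' v i a b := by
    simp only [ofFn_update]; exact (hx _ _).map_add a b
  map_update_smul' v i c a := by
    simp only [ofFn_update]; exact (hx _ _).map_smul c a

theorem exists_alt (n : ℕ) (x : Om L B) (hx : Lin x) (ha : Anti x) (hd : Deg n x) :
    ∃ η : AlternatingMap ℝ L B (Fin n), ∀ v, η v = x (List.ofFn v) := by
  refine ⟨((n.factorial : ℝ)⁻¹) • MultilinearMap.alternatization (toMul n x hx), ?_⟩
  intro v
  have h := altL_ofFn n x v
  rw [altL_anti n x ha hd, nsmul_ap] at h
  rw [AlternatingMap.smul_apply, MultilinearMap.alternatization_apply]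
  have e : ∀ τ : Equiv.Perm (Fin n), Equiv.Perm.sign τ • (toMul n x hx).domDomCongr τ v =
    (Equiv.Perm.sign τ : ℤ) • x (List.ofFn fun i => v (τ i)) := by
    intro τ; rfl
  simp only [e]
  rw [← h, ← Nat.cast_smul_eq_nsmul ℝ, smul_smul, inv_mul_cancel₀ (by positivity), one_smul]

end

section
variable [Ring B] [Algebra ℝ B]

theorem mul_lin_aux (l : List L) (x : L → Om L B) (y : Om L B)
    (hx : ∀ l, IsLinearMap ℝ (fun a => x a l)) : IsLinearMap ℝ (fun a => (x a * y) l) := by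
  induction l generalizing x y with
  | nil =>
    exact ⟨fun a b => by simp [mul_nil, (hx []).map_add, add_mul],
      fun c a => by simp [mul_nil, (hx []).map_smul]⟩
  | cons b l ih =>
    simp only [mul_cons]
    refine isLin_add (ih _ _ fun l => hx _) (ih _ _ fun l => ?_)
    exact ⟨fun a b => by simp [sg_ap, (hx l).map_add],
      fun c a => by simp [sg_ap, (hx l).map_smul, smul_comm]⟩

theorem mul_lin_aux' (l : List L) (x : Om L B) (y : L → Om L B)
    (hy : ∀ l, IsLinearMap ℝ (fun a => y a l)) : IsLinearMap ℝ (fun a => (x * y a) l) := by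
  induction l generalizing x y with
  | nil =>
    exact ⟨fun a b => by simp [mul_nil, (hy []).map_add, mul_add],
      fun c a => by simp [mul_nil, (hy []).map_smul]⟩
  | cons b l ih =>
    simp only [mul_cons]
    exact isLin_add (ih _ _ hy) (ih _ _ fun l => hy _)

theorem Lin.mul {x y : Om L B} (hx : Lin x) (hy : Lin y) : Lin (x * y) := by
  intro l₁ l₂
  induction l₁ generalizing x y with
  | nil =>
    exact isLin_add (mul_lin_aux l₂ _ _ fun l => hx [] l) (mul_lin_aux' l₂ _ _ fun l => hy [] l)
  | cons c l ih =>
    exact isLin_add (ih (hx.io c) hy) (ih hx.sg (hy.io c))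

theorem Lin.pow {x : Om L B} (hx : Lin x) (n : ℕ) : Lin (x ^ n) := by
  induction n with
  | zero => rw [pow_zero]; exact lin_of0 1
  | succ n ih => rw [pow_succ]; exact ih.mul hx

end
end lin

section lin2
variable {L B : Type*} [LieRing L] [LieAlgebra ℝ L] [Ring B] [Algebra ℝ B]

theorem Lin.qq {R w : Om L B} (hR : Lin R) (hw : Lin w) (n : ℕ) : Lin (qq R n w) :=
  lin_sum _ _ fun i _ => ((hR.pow i).mul hw).mul (hR.pow _)

theorem deg_qq {R w : Om L B} (hR : Deg 2 R) (hw : Deg 1 w) (n : ℕ) {k : ℕ} (hk : k + 1 = 2 * n) :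
    Deg k (qq R n w) := by
  intro l hl
  rw [qq, sum_ap]
  apply Finset.sum_eq_zero
  intro i hi
  have hi' : i < n := Finset.mem_range.mp hi
  refine (((deg_pow hR i).mul hw).mul (deg_pow hR (n - 1 - i))) l ?_
  omega

theorem lin_cur (act : L →ₗ[ℝ] B →ₗ[ℝ] B) (α : L →ₗ[ℝ] B) :
    Lin (cur (fun a => (act a).toAddMonoidHom) α) := by
  refine Lin.add ?_ ((lin_of1 α.isLinear).mul (lin_of1 α.isLinear))
  have h : ∀ c, Om.io c (dd (fun a => (act a).toAddMonoidHom) (of1 α)) =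
    of1 (fun b => act c (α b) - α ⁅c, b⁆ - act b (α c)) := by
    intro c; rw [io_dd_of1]; rfl
  apply lin_of
  · intro l
    have e : ∀ a, dd (fun a => (act a).toAddMonoidHom) (of1 α) (a :: l) =
      of1 (fun b => act a (α b) - α ⁅a, b⁆ - act b (α a)) l := fun a => congrFun (h a) l
    simp only [e]
    cases l with
    | nil => exact ⟨fun a b => by simp, fun c a => by simp⟩
    | cons b l =>
      cases l with
      | nil =>
        exact ⟨fun a b => by simp [of1]; abel, fun c a => by simp [of1, smul_sub]⟩
      | cons b l => exact ⟨fun a b => by simp [of1, of0], fun c a => by simp [of1, of0]⟩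
  · intro c
    rw [h]
    apply lin_of1
    exact ⟨fun a b => by simp; abel, fun c a => by simp [smul_sub]⟩

theorem Deg.mp {M : Type*} [AddCommGroup M] {n : ℕ} {x : Om L B} (hx : Deg n x) (f : B →+ M) :
    Deg n (mp f x) := fun l hl => by rw [mp_ap, hx l hl, map_zero]

end lin2

section star
variable {L B M : Type*} [LieRing L] [Ring B] [AddCommGroup M]

theorem star_cur (act : L → B →+ B) (st : B →+ B) (hst : ∀ x y, st (x * y) = st y * st x)
    (h : L → B) (hsa : ∀ a x, st (act a x) = act a (st x) + h a * st x - st x * h a)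
    (hh : cur act h = 0) (β : L → B) :
    mp st (cur act β) = - cur act (fun a => h a - st (β a)) := by
  have e1 : mp st (of1 β * of1 β) = - (of1 (fun a => st (β a)) * of1 (fun a => st (β a))) := by
    have : ∀ l, mp st (of1 β * of1 β) l = (mp st (sg (of1 β)) * mp st (of1 β)) l := fun l =>
      (mp_rev_aux st (AddMonoidHom.id B) st hst l (of1 β) (of1 β)).2 (sg_of1 β)
    rw [ext' this, sg_of1, map_neg, mp_of1, neg_mul]
  have e2 : mp st (dd act (of1 β)) = dd act (of1 fun a => st (β a)) +
      of1 h * of1 (fun a => st (β a)) + of1 (fun a => st (β a)) * of1 h := by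
    apply ext_io
    · simp [mp_ap, dd_nil, mul_nil]
    intro a
    rw [io_mp, io_dd_of1, mp_of1, map_add, map_add, io_dd_of1, io_mul, io_mul]
    simp only [io_of1, sg_of1]
    apply ext_io
    · simp [mul_nil]
    intro b
    simp only [io_of1, map_add, io_mul, io_of0, zero_mul, sg_of0, map_neg, neg_mul, sg_of1]
    apply ext_io
    · simp [mul_nil, hsa, map_sub]
      abel
    · intro c
      simp [io_mul, mul_nil, sg_mul]
  have e3 : cur act (fun a => h a - st (β a)) = cur act h - dd act (of1 fun a => st (β a)) -
      of1 h * of1 (fun a => st (β a)) - of1 (fun a => st (β a)) * of1 h +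
      of1 (fun a => st (β a)) * of1 (fun a => st (β a)) := by
    rw [cur, cur, of1_sub, map_sub]; noncomm_ring
  rw [e3, hh, cur, map_add, e1, e2]
  noncomm_ring

theorem star_pow (st : B →+ B) (hst : ∀ x y, st (x * y) = st y * st x) (h1 : st 1 = 1)
    (x : Om L B) (hx : sg x = x) (n : ℕ) : mp st (x ^ n) = mp st x ^ n := by
  induction n with
  | zero => rw [pow_zero, pow_zero, one_def, mp_of0, h1]
  | succ n ih =>
    have := mp_rev_even st (AddMonoidHom.id B) st hst (sg_pow hx n) x
    rw [pow_succ, this, ih, pow_succ']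
    rfl

theorem tr_star_cur (act : L → B →+ B) (st : B →+ B) (hst : ∀ x y, st (x * y) = st y * st x)
    (h1 : st 1 = 1) (tr : B →+ M) (htr : ∀ x y, tr (x * y) = tr (y * x)) (hts : ∀ x, tr (st x) = tr x)
    (h : L → B) (hsa : ∀ a x, st (act a x) = act a (st x) + h a * st x - st x * h a)
    (hh : cur act h = 0) (β γ : L → B) (n : ℕ) (hn : Even n) :
    mp tr (of1 (fun a => st (γ a)) * cur act (fun a => h a - st (β a)) ^ n) =
      mp tr (of1 γ * cur act β ^ n) := by
  have e := star_cur act st hst h hsa hh β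
  have hs := sg_pow (sg_cur act β) n
  rw [← hn.neg_pow, ← e, ← star_pow st hst h1 _ (sg_cur act β), ← mp_of1]
  have := mp_rev_even st (AddMonoidHom.id B) st hst hs (of1 γ)
  have h2 : mp (AddMonoidHom.id B) (mp st (of1 γ) * mp st (cur act β ^ n)) =
    mp st (of1 γ) * mp st (cur act β ^ n) := rfl
  rw [← h2, ← this]
  have h3 : ∀ x : Om L B, mp tr (mp st x) = mp tr x := by
    intro x; ext l; simp [mp_ap, hts]
  rw [h3, tr_even tr htr hs]

theorem tr_star_ch (act : L → B →+ B) (st : B →+ B) (hst : ∀ x y, st (x * y) = st y * st x)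
    (h1 : st 1 = 1) (tr : B →+ M) (hts : ∀ x, tr (st x) = tr x)
    (h : L → B) (hsa : ∀ a x, st (act a x) = act a (st x) + h a * st x - st x * h a)
    (hh : cur act h = 0) (β : L → B) (hβ : ∀ a, h a - st (β a) = β a) (n : ℕ) (hn : Odd n) :
    mp tr (cur act β ^ n) = - mp tr (cur act β ^ n) := by
  have e := star_cur act st hst h hsa hh β
  simp only [hβ] at e
  have h3 : ∀ x : Om L B, mp tr (mp st x) = mp tr x := by
    intro x; ext l; simp [mp_ap, hts]
  conv_lhs => rw [← h3, star_pow st hst h1 _ (sg_cur act β), e, hn.neg_pow, map_neg]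

end star
end Om


namespace Om
open TensorProduct Polynomial

/-- an algebra with a Lie action and an equivariant trace -/
structure Sys (L A M : Type*) [LieRing L] [LieAlgebra ℝ L] [Ring A] [Algebra ℝ A]
    [AddCommGroup M] [Module ℝ M] where
  act : L →ₗ[ℝ] A →ₗ[ℝ] A
  act' : L → M →ₗ[ℝ] M
  tr : A →ₗ[ℝ] M
  hder : ∀ a x y, act a (x * y) = act a x * y + x * act a y
  hact : ∀ a b x, act ⁅a, b⁆ x = act a (act b x) - act b (act a x)
  htr : ∀ x y, tr (x * y) = tr (y * x)
  htra : ∀ a x, tr (act a x) = act' a (tr x)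

namespace Sys
variable {L A M A' M' : Type*} [LieRing L] [LieAlgebra ℝ L] [Ring A] [Algebra ℝ A]
    [AddCommGroup M] [Module ℝ M] [Ring A'] [Algebra ℝ A']
    [AddCommGroup M'] [Module ℝ M']

def Ac (s : Sys L A M) (a : L) : A →+ A := (s.act a).toAddMonoidHom
/-- additive action on the target -/
def Ac' (s : Sys L A M) (a : L) : M →+ M := (s.act' a).toAddMonoidHom
/-- additive trace -/
def Tr (s : Sys L A M) : A →+ M := s.tr.toAddMonoidHom

/-- `Tr (γ Rⁿ)` -/
def T (s : Sys L A M) (β γ : L → A) (n : ℕ) : Om L M := mp s.Tr (of1 γ * cur s.Ac β ^ n)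

theorem T_nat (s : Sys L A M) (s' : Sys L A' M') (f : A →+* A') (f' : M →+ M')
    (h1 : ∀ a x, f (s.act a x) = s'.act a (f x)) (h2 : ∀ x, f' (s.tr x) = s'.tr (f x))
    (β γ : L → A) (n : ℕ) :
    mp f' (s.T β γ n) = s'.T (fun a => f (β a)) (fun a => f (γ a)) n := by
  have e : ∀ x : Om L A, mp f' (mp s.Tr x) = mp s'.Tr (mp f.toAddMonoidHom x) := by
    intro x; ext l; exact h2 _
  rw [T, T, e, mp_mul f.toAddMonoidHom f.map_mul, mp_of1,
    mp_pow f.toAddMonoidHom f.map_mul f.map_one,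
    mp_cur s.Ac s'.Ac f.toAddMonoidHom f.map_mul h1]
  rfl

theorem ch_nat (s : Sys L A M) (s' : Sys L A' M') (f : A →+* A') (f' : M →+ M')
    (h1 : ∀ a x, f (s.act a x) = s'.act a (f x)) (h2 : ∀ x, f' (s.tr x) = s'.tr (f x))
    (β : L → A) (n : ℕ) :
    mp f' (mp s.Tr (cur s.Ac β ^ n)) = mp s'.Tr (cur s'.Ac (fun a => f (β a)) ^ n) := by
  have e : ∀ x : Om L A, mp f' (mp s.Tr x) = mp s'.Tr (mp f.toAddMonoidHom x) := by
    intro x; ext l; exact h2 _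
  rw [e, mp_pow f.toAddMonoidHom f.map_mul f.map_one,
    mp_cur s.Ac s'.Ac f.toAddMonoidHom f.map_mul h1]
  rfl

theorem T_add (s : Sys L A M) (β γ γ' : L → A) (n : ℕ) :
    s.T β (fun a => γ a + γ' a) n = s.T β γ n + s.T β γ' n := by
  rw [T, of1_add, add_mul, map_add]; rfl

theorem T_zero (s : Sys L A M) (β : L → A) (n : ℕ) : s.T β (fun _ => 0) n = 0 := by
  have := s.T_add β (fun _ => 0) (fun _ => 0) n
  simpa using this

theorem T_neg (s : Sys L A M) (β γ : L → A) (n : ℕ) :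
    s.T β (fun a => - γ a) n = - s.T β γ n := by
  have := s.T_add β (fun a => - γ a) γ n
  simp only [neg_add_cancel, T_zero] at this
  exact eq_neg_of_add_eq_zero_left this.symm

theorem T_lin (s : Sys L A M) (β γ : L →ₗ[ℝ] A) (n : ℕ) : Lin (s.T β γ n) :=
  ((lin_of1 γ.isLinear).mul ((lin_cur s.act β).pow n)).mp s.tr

theorem T_anti (s : Sys L A M) (β γ : L →ₗ[ℝ] A) (n : ℕ) : Anti (s.T β γ n) :=
  ((anti_of1 _).mul ((anti_cur s.Ac β.toAddMonoidHom).pow n)).mp s.Tr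

variable (S S' : Type*) [CommRing S] [Algebra ℝ S] [CommRing S'] [Algebra ℝ S']

noncomputable def bc (s : Sys L A M) : Sys L (A ⊗[ℝ] S) (M ⊗[ℝ] S) where
  act := (LinearMap.rTensorHom S) ∘ₗ s.act
  act' a := LinearMap.rTensor S (s.act' a)
  tr := LinearMap.rTensor S s.tr
  hder a x y := by
    induction x with
    | zero => simp
    | add x x' h h' => rw [add_mul, map_add, h, h', map_add]; noncomm_ring
    | tmul x p =>
      induction y with
      | zero => simp
      | add x x' h h' => rw [mul_add, map_add, h, h', map_add]; noncomm_ring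
      | tmul y q => simp [s.hder, TensorProduct.add_tmul]
  hact a b x := by
    induction x with
    | zero => simp
    | add x x' h h' => simp only [map_add] at *; rw [h, h']; abel
    | tmul x p => simp [s.hact, TensorProduct.sub_tmul]
  htr x y := by
    induction x with
    | zero => simp
    | add x x' h h' => rw [add_mul, map_add, h, h', mul_add, map_add]
    | tmul x p =>
      induction y with
      | zero => simp
      | add x x' h h' => rw [mul_add, map_add, h, h', add_mul, map_add]
      | tmul y q => simp [s.htr x y, mul_comm p q]
  htra a x := by
    induction x with
    | zero => simp
    | add x x' h h' => simp only [map_add] at *; rw [h, h']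
    | tmul x p => simp [s.htra]

variable {S S'}

theorem bc_dd (s : Sys L A M) (φ : S →ₗ[ℝ] S') (x : Om L (M ⊗[ℝ] S)) :
    mp (LinearMap.lTensor M φ).toAddMonoidHom (dd (s.bc S).Ac' x) =
      dd (s.bc S').Ac' (mp (LinearMap.lTensor M φ).toAddMonoidHom x) := by
  apply mp_dd
  intro a x
  exact LinearMap.congr_fun ((LinearMap.lTensor_comp_rTensor M (s.act' a) φ).trans
    (LinearMap.rTensor_comp_lTensor M (s.act' a) φ).symm) x

theorem bc_dd0 (s : Sys L A M) (φ : S →ₗ[ℝ] ℝ) (x : Om L (M ⊗[ℝ] S)) :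
    mp ((TensorProduct.rid ℝ M).toLinearMap ∘ₗ LinearMap.lTensor M φ).toAddMonoidHom
       (dd (s.bc S).Ac' x) =
      dd s.Ac' (mp ((TensorProduct.rid ℝ M).toLinearMap ∘ₗ
        LinearMap.lTensor M φ).toAddMonoidHom x) := by
  apply mp_dd
  intro a x
  change TensorProduct.rid ℝ M (LinearMap.lTensor M φ (LinearMap.rTensor S (s.act' a) x)) =
    s.act' a (TensorProduct.rid ℝ M (LinearMap.lTensor M φ x))
  induction x with
  | zero => simp
  | add x x' h h' => simp only [map_add] at *; rw [h, h']
  | tmul x p => simp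

theorem bc_T (s : Sys L A M) (φ : S →ₐ[ℝ] S') (β γ : L → A ⊗[ℝ] S) (n : ℕ) :
    mp (LinearMap.lTensor M φ.toLinearMap).toAddMonoidHom ((s.bc S).T β γ n) =
      (s.bc S').T (fun a => LinearMap.lTensor A φ.toLinearMap (β a))
        (fun a => LinearMap.lTensor A φ.toLinearMap (γ a)) n := by
  have e : ∀ x : A ⊗[ℝ] S, Algebra.TensorProduct.map (AlgHom.id ℝ A) φ x =
    LinearMap.lTensor A φ.toLinearMap x := fun x => rfl
  refine (T_nat (s.bc S) (s.bc S') (Algebra.TensorProduct.map (AlgHom.id ℝ A) φ).toRingHom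
    (LinearMap.lTensor M φ.toLinearMap).toAddMonoidHom ?_ ?_ β γ n)
  · intro a x
    exact LinearMap.congr_fun ((LinearMap.lTensor_comp_rTensor A (s.act a) φ.toLinearMap).trans
      (LinearMap.rTensor_comp_lTensor A (s.act a) φ.toLinearMap).symm) x
  · intro x
    exact LinearMap.congr_fun ((LinearMap.lTensor_comp_rTensor A s.tr φ.toLinearMap).trans
      (LinearMap.rTensor_comp_lTensor A s.tr φ.toLinearMap).symm) x

/-- `id ⊗ φ` into a module -/
noncomputable def ll (M : Type*) [AddCommGroup M] [Module ℝ M] (φ : S →ₗ[ℝ] ℝ) : M ⊗[ℝ] S →ₗ[ℝ] M :=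
  (TensorProduct.rid ℝ M).toLinearMap ∘ₗ LinearMap.lTensor M φ

@[simp] theorem ll_tmul (φ : S →ₗ[ℝ] ℝ) (m : M) (p : S) : ll M φ (m ⊗ₜ p) = φ p • m := by
  simp [ll]

theorem ll_dd (s : Sys L A M) (φ : S →ₗ[ℝ] ℝ) (x : Om L (M ⊗[ℝ] S)) :
    mp (ll M φ).toAddMonoidHom (dd (s.bc S).Ac' x) =
      dd s.Ac' (mp (ll M φ).toAddMonoidHom x) := s.bc_dd0 φ x

/-- evaluation as a ring hom -/
noncomputable def llr (A : Type*) [Ring A] [Algebra ℝ A] (φ : S →ₐ[ℝ] ℝ) : A ⊗[ℝ] S →ₐ[ℝ] A :=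
  (Algebra.TensorProduct.rid ℝ ℝ A).toAlgHom.comp (Algebra.TensorProduct.map (AlgHom.id ℝ A) φ)

@[simp] theorem llr_tmul (φ : S →ₐ[ℝ] ℝ) (m : A) (p : S) : llr A φ (m ⊗ₜ p) = φ p • m := by
  simp [llr]

theorem llr_act (s : Sys L A M) (φ : S →ₐ[ℝ] ℝ) (a : L) (x : A ⊗[ℝ] S) :
    llr A φ ((s.bc S).act a x) = s.act a (llr A φ x) := by
  change llr A φ (LinearMap.rTensor S (s.act a) x) = _
  induction x with
  | zero => simp
  | add x x' h h' => simp only [map_add] at *; rw [h, h']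
  | tmul x p => simp

theorem llr_tr (s : Sys L A M) (φ : S →ₐ[ℝ] ℝ) (x : A ⊗[ℝ] S) :
    ll M φ.toLinearMap ((s.bc S).tr x) = s.tr (llr A φ x) := by
  change ll M φ.toLinearMap (LinearMap.rTensor S s.tr x) = _
  induction x with
  | zero => simp
  | add x x' h h' => simp only [map_add] at *; rw [h, h']
  | tmul x p => simp

theorem ll_T (s : Sys L A M) (φ : S →ₐ[ℝ] ℝ) (β γ : L → A ⊗[ℝ] S) (n : ℕ) :
    mp (ll M φ.toLinearMap).toAddMonoidHom ((s.bc S).T β γ n) =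
      s.T (fun a => llr A φ (β a)) (fun a => llr A φ (γ a)) n :=
  T_nat (s.bc S) s (llr A φ).toRingHom (ll M φ.toLinearMap).toAddMonoidHom
    (s.llr_act φ) (s.llr_tr φ) β γ n

theorem ll_ch (s : Sys L A M) (φ : S →ₐ[ℝ] ℝ) (β : L → A ⊗[ℝ] S) (n : ℕ) :
    mp (ll M φ.toLinearMap).toAddMonoidHom (mp (s.bc S).Tr (cur (s.bc S).Ac β ^ n)) =
      mp s.Tr (cur s.Ac (fun a => llr A φ (β a)) ^ n) :=
  ch_nat (s.bc S) s (llr A φ).toRingHom (ll M φ.toLinearMap).toAddMonoidHom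
    (s.llr_act φ) (s.llr_tr φ) β n

theorem lder (δ : S →ₗ[ℝ] S) (hδ : ∀ p q, δ (p * q) = δ p * q + p * δ q) (x y : A ⊗[ℝ] S) :
    LinearMap.lTensor A δ (x * y) = LinearMap.lTensor A δ x * y + x * LinearMap.lTensor A δ y := by
  induction x with
  | zero => simp
  | add x x' h h' => rw [add_mul, map_add, h, h', map_add]; noncomm_ring
  | tmul x p =>
    induction y with
    | zero => simp
    | add x x' h h' => rw [mul_add, map_add, h, h', map_add]; noncomm_ring
    | tmul y q => simp [hδ, TensorProduct.tmul_add]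

theorem lact (s : Sys L A M) (δ : S →ₗ[ℝ] S) (a : L) (x : A ⊗[ℝ] S) :
    LinearMap.lTensor A δ ((s.bc S).act a x) = (s.bc S).act a (LinearMap.lTensor A δ x) :=
  LinearMap.congr_fun ((LinearMap.lTensor_comp_rTensor A (s.act a) δ).trans
      (LinearMap.rTensor_comp_lTensor A (s.act a) δ).symm) x

theorem ltr (s : Sys L A M) (δ : S →ₗ[ℝ] S) (x : A ⊗[ℝ] S) :
    (s.bc S).tr (LinearMap.lTensor A δ x) = LinearMap.lTensor M δ ((s.bc S).tr x) :=
  (LinearMap.congr_fun ((LinearMap.lTensor_comp_rTensor A s.tr δ).trans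
      (LinearMap.rTensor_comp_lTensor A s.tr δ).symm) x).symm

theorem bc_trans1 (s : Sys L A M) (δ : S →ₗ[ℝ] S) (hδ : ∀ p q, δ (p * q) = δ p * q + p * δ q)
    (α : L →ₗ[ℝ] A ⊗[ℝ] S) (n : ℕ) :
    mp (LinearMap.lTensor M δ).toAddMonoidHom (mp (s.bc S).Tr (cur (s.bc S).Ac α ^ (n + 1))) =
      (n + 1) • dd (s.bc S).Ac' ((s.bc S).T α (fun a => LinearMap.lTensor A δ (α a)) n) :=
  trans1 (s.bc S).Ac (s.bc S).Ac' (s.bc S).Tr (s.bc S).htr (s.bc S).htra (s.bc S).hder (s.bc S).hact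
    α.toAddMonoidHom (LinearMap.lTensor A δ).toAddMonoidHom (LinearMap.lTensor M δ).toAddMonoidHom
    (lder δ hδ) (s.lact δ) (s.ltr δ) n

theorem bc_trans2 (s : Sys L A M) (δ : S →ₗ[ℝ] S) (hδ : ∀ p q, δ (p * q) = δ p * q + p * δ q)
    (ε : S →ₗ[ℝ] S) (hε : ∀ p q, ε (p * q) = ε p * q + p * ε q) (hδε : δ ∘ₗ ε = ε ∘ₗ δ)
    (α : L →ₗ[ℝ] A ⊗[ℝ] S) (n : ℕ) :
    dd (s.bc S).Ac' (mp (s.bc S).Tr (of1 (fun a => LinearMap.lTensor A δ (α a)) *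
        qq (cur (s.bc S).Ac α) n (of1 (fun a => LinearMap.lTensor A ε (α a))))) =
      mp (LinearMap.lTensor M δ).toAddMonoidHom
        ((s.bc S).T α (fun a => LinearMap.lTensor A ε (α a)) n) -
      mp (LinearMap.lTensor M ε).toAddMonoidHom
        ((s.bc S).T α (fun a => LinearMap.lTensor A δ (α a)) n) :=
  trans2 (s.bc S).Ac (s.bc S).Ac' (s.bc S).Tr (s.bc S).htr (s.bc S).htra (s.bc S).hder (s.bc S).hact
    α.toAddMonoidHom (LinearMap.lTensor A δ).toAddMonoidHom (LinearMap.lTensor M δ).toAddMonoidHom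
    (lder δ hδ) (s.lact δ) (s.ltr δ)
    (LinearMap.lTensor A ε).toAddMonoidHom (LinearMap.lTensor M ε).toAddMonoidHom
    (lder ε hε) (s.lact ε) (s.ltr ε)
    (fun x => by
      have := congrArg (LinearMap.lTensor A) hδε
      rw [LinearMap.lTensor_comp, LinearMap.lTensor_comp] at this
      exact LinearMap.congr_fun this x) n

end Sys
end Om


namespace Om
open TensorProduct Polynomial

/-- integral of a real polynomial over the unit interval -/
noncomputable def Ipol : ℝ[X] →ₗ[ℝ] ℝ :=
  Polynomial.lsum (fun k => ((k : ℝ) + 1)⁻¹ • (LinearMap.id : ℝ →ₗ[ℝ] ℝ))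

theorem Ipol_monomial (k : ℕ) (c : ℝ) : Ipol (monomial k c) = ((k : ℝ) + 1)⁻¹ * c := by
  simp [Ipol, Polynomial.lsum_apply, Polynomial.sum_monomial_index]

/-- real evaluation -/
noncomputable def evl (r : ℝ) : ℝ[X] →ₐ[ℝ] ℝ := Polynomial.aeval r

theorem Ipol_der : Ipol ∘ₗ (Polynomial.derivative : ℝ[X] →ₗ[ℝ] ℝ[X]) =
    (evl 1).toLinearMap - (evl 0).toLinearMap := by
  apply Polynomial.lhom_ext'
  intro k
  apply LinearMap.ext_ring
  cases k with
  | zero => simp [evl]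
  | succ k =>
    have : (k : ℝ) + 1 ≠ 0 := by positivity
    simp [Ipol_monomial, Polynomial.derivative_monomial, evl]
    rw [← mul_add_one, inv_mul_cancel₀ this]

theorem pder (p q : ℝ[X]) : (Polynomial.derivative : ℝ[X] →ₗ[ℝ] ℝ[X]) (p * q) =
    derivative p * q + p * derivative q := Polynomial.derivative_mul

/-- two variable polynomials -/
abbrev S2 := ℝ[X] ⊗[ℝ] ℝ[X]

/-- `∂/∂s` -/
noncomputable def ds : S2 →ₗ[ℝ] S2 := LinearMap.rTensor ℝ[X] Polynomial.derivative
/-- `∂/∂t` -/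
noncomputable def dt : S2 →ₗ[ℝ] S2 := LinearMap.lTensor ℝ[X] Polynomial.derivative

theorem dt_mul (p q : S2) : dt (p * q) = dt p * q + p * dt q := Sys.lder _ pder p q

theorem ds_mul (x y : S2) : ds (x * y) = ds x * y + x * ds y := by
  unfold ds
  induction x using TensorProduct.induction_on with
  | zero => simp
  | add x x' h h' => rw [add_mul, map_add, h, h', map_add]; ring
  | tmul x p =>
    induction y using TensorProduct.induction_on with
    | zero => simp
    | add x x' h h' => rw [mul_add, map_add, h, h', map_add]; ring
    | tmul y q => simp [TensorProduct.add_tmul]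

theorem dt_ds : dt ∘ₗ ds = ds ∘ₗ dt :=
  (LinearMap.lTensor_comp_rTensor _ _ _).trans (LinearMap.rTensor_comp_lTensor _ _ _).symm

/-- evaluation at `s = r` -/
noncomputable def Es (r : ℝ) : S2 →ₐ[ℝ] ℝ[X] :=
  (Algebra.TensorProduct.lid ℝ ℝ[X]).toAlgHom.comp
    (Algebra.TensorProduct.map (evl r) (AlgHom.id ℝ ℝ[X]))
/-- evaluation at `t = r` -/
noncomputable def Et (r : ℝ) : S2 →ₐ[ℝ] ℝ[X] :=
  (Algebra.TensorProduct.rid ℝ ℝ ℝ[X]).toAlgHom.comp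
    (Algebra.TensorProduct.map (AlgHom.id ℝ ℝ[X]) (evl r))

theorem Es_tmul (r : ℝ) (p q : ℝ[X]) : Es r (p ⊗ₜ q) = evl r p • q := by simp [Es]
theorem Et_tmul (r : ℝ) (p q : ℝ[X]) : Et r (p ⊗ₜ q) = evl r q • p := by simp [Et]

/-- double integral -/
noncomputable def I2 : S2 →ₗ[ℝ] ℝ := Ipol ∘ₗ Sys.ll ℝ[X] Ipol

theorem I2_tmul (p q : ℝ[X]) : I2 (p ⊗ₜ q) = Ipol p * Ipol q := by
  simp [I2, mul_comm]

theorem I2_dt : I2 ∘ₗ dt = Ipol ∘ₗ (Et 1).toLinearMap - Ipol ∘ₗ (Et 0).toLinearMap := by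
  apply TensorProduct.ext'
  intro p q
  have := LinearMap.congr_fun Ipol_der q
  simp only [LinearMap.comp_apply, LinearMap.sub_apply, AlgHom.toLinearMap_apply] at this
  simp only [dt, LinearMap.comp_apply, LinearMap.lTensor_tmul, I2_tmul, LinearMap.sub_apply, this,
    AlgHom.toLinearMap_apply, Et_tmul, map_smul, smul_eq_mul]
  ring

theorem I2_ds : I2 ∘ₗ ds = Ipol ∘ₗ (Es 1).toLinearMap - Ipol ∘ₗ (Es 0).toLinearMap := by
  apply TensorProduct.ext'
  intro p q
  have := LinearMap.congr_fun Ipol_der p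
  simp only [LinearMap.comp_apply, LinearMap.sub_apply, AlgHom.toLinearMap_apply] at this
  simp only [ds, LinearMap.comp_apply, LinearMap.rTensor_tmul, I2_tmul, LinearMap.sub_apply, this,
    AlgHom.toLinearMap_apply, Es_tmul, map_smul, smul_eq_mul]
  ring

theorem Deg.mp' {L B M : Type*} [AddCommGroup B] [AddCommGroup M] {n : ℕ} {x : Om L B}
    (hx : Deg n x) (f : B →+ M) :
    Deg n (Om.mp f x) := fun l hl => by rw [mp_ap, hx l hl, map_zero]

namespace Sys
variable {L A M : Type*} [LieRing L] [LieAlgebra ℝ L] [Ring A] [Algebra ℝ A]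
    [AddCommGroup M] [Module ℝ M]

theorem ll_comp {S S' : Type*} [CommRing S] [Algebra ℝ S] [CommRing S'] [Algebra ℝ S']
    (φ : S' →ₗ[ℝ] ℝ) (ψ : S →ₗ[ℝ] S') (x : M ⊗[ℝ] S) :
    ll M φ (LinearMap.lTensor M ψ x) = ll M (φ ∘ₗ ψ) x := by
  simp [ll, LinearMap.lTensor_comp]

theorem ll_sub {S : Type*} [CommRing S] [Algebra ℝ S]
    (φ ψ : S →ₗ[ℝ] ℝ) (x : M ⊗[ℝ] S) : ll M (φ - ψ) x = ll M φ x - ll M ψ x := by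
  simp [ll, LinearMap.lTensor_sub]

theorem mp_ll_comp {S S' : Type*} [CommRing S] [Algebra ℝ S] [CommRing S'] [Algebra ℝ S']
    (φ : S' →ₗ[ℝ] ℝ) (ψ : S →ₗ[ℝ] S') (x : Om L (M ⊗[ℝ] S)) :
    mp (ll M φ).toAddMonoidHom (mp (LinearMap.lTensor M ψ).toAddMonoidHom x) =
      mp (ll M (φ ∘ₗ ψ)).toAddMonoidHom x := by
  ext l; exact ll_comp φ ψ _

theorem mp_ll_sub {S : Type*} [CommRing S] [Algebra ℝ S]
    (φ ψ : S →ₗ[ℝ] ℝ) (x : Om L (M ⊗[ℝ] S)) : mp (ll M (φ - ψ)).toAddMonoidHom x =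
    mp (ll M φ).toAddMonoidHom x - mp (ll M ψ).toAddMonoidHom x := by
  ext l; exact ll_sub φ ψ _

/-- `β ⊗ p` -/
noncomputable def ten {S : Type*} [CommRing S] [Algebra ℝ S] (β : L →ₗ[ℝ] A) (p : S) :
    L →ₗ[ℝ] A ⊗[ℝ] S := ((TensorProduct.mk ℝ A S).flip p) ∘ₗ β

@[simp] theorem ten_ap {S : Type*} [CommRing S] [Algebra ℝ S] (β : L →ₗ[ℝ] A) (p : S) (a : L) :
    ten β p a = β a ⊗ₜ p := rfl

/-- abstract Chern–Simons form -/
noncomputable def csO (s : Sys L A M) (β : L →ₗ[ℝ] A) (n : ℕ) : Om L M :=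
  mp (ll M Ipol).toAddMonoidHom ((s.bc ℝ[X]).T (ten β X) (ten β 1) n)

theorem csO_anti (s : Sys L A M) (β : L →ₗ[ℝ] A) (n : ℕ) : Anti (s.csO β n) :=
  (T_anti _ _ _ _).mp _

theorem csO_dd (s : Sys L A M) (β : L →ₗ[ℝ] A) (n : ℕ) :
    (n + 1) • dd s.Ac' (s.csO β n) = mp s.Tr (cur s.Ac β ^ (n + 1)) := by
  have h := congrArg (mp (ll M Ipol).toAddMonoidHom)
    (s.bc_trans1 (Polynomial.derivative : ℝ[X] →ₗ[ℝ] ℝ[X]) pder (ten β X) n)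
  rw [mp_ll_comp, Ipol_der, mp_ll_sub, ll_ch, ll_ch, map_nsmul, ll_dd] at h
  have e0 : (fun a => llr A (evl 0) (ten β X a)) = fun _ => 0 := by
    funext a; simp [evl]
  have e1 : (fun a => llr A (evl 1) (ten β X a)) = β := by
    funext a; simp [evl]
  have e2 : (fun a => LinearMap.lTensor A (Polynomial.derivative : ℝ[X] →ₗ[ℝ] ℝ[X]) (ten β X a)) =
    ten β 1 := by funext a; simp
  have e3 : cur s.Ac (fun _ => 0) = 0 := by
    have : of1 (fun _ : L => (0 : A)) = 0 := by apply ext_io <;> simp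
    rw [cur, this]; simp
  rw [e0, e1, e2, e3, zero_pow (by omega)] at h
  rw [csO, ← h]; simp

theorem closed (s : Sys L A M) (st : A →ₗ[ℝ] A) (hst : ∀ x y, st (x * y) = st y * st x)
    (h1 : st 1 = 1) (hts : ∀ x, s.tr (st x) = s.tr x) (αh αm : L →ₗ[ℝ] A)
    (hsa : ∀ a x, st (s.act a x) = s.act a (st x) + αh a * st x - st x * αh a)
    (hh : cur s.Ac αh = 0) (hm : ∀ a, st (αm a) = αh a - αm a)
    (n : ℕ) (hn : Even n) : dd s.Ac' (s.csO αm n) = 0 := by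
  have h := s.csO_dd αm n
  have h2 := tr_star_ch s.Ac st.toAddMonoidHom hst h1 s.Tr hts αh hsa hh αm
    (fun a => by change αh a - st (αm a) = _; rw [hm]; abel) (n + 1) hn.add_one
  ext l
  have h3 := congrFun h l
  have h4 := congrFun h2 l
  rw [nsmul_ap] at h3
  rw [neg_ap] at h4
  have h5 : (mp s.Tr (cur s.Ac αm ^ (n + 1))) l = 0 := by
    have : (2 : ℝ) • (mp s.Tr (cur s.Ac αm ^ (n + 1))) l = 0 := by
      rw [two_smul]; nth_rewrite 1 [h4]; simp
    exact (smul_eq_zero.mp this).resolve_left two_ne_zero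
  rw [h5, ← Nat.cast_smul_eq_nsmul ℝ] at h3
  exact (smul_eq_zero.mp h3).resolve_left (by positivity)

theorem exact' (s : Sys L A M) (st : A →ₗ[ℝ] A) (hst : ∀ x y, st (x * y) = st y * st x)
    (h1 : st 1 = 1) (hts : ∀ x, s.tr (st x) = s.tr x) (αh αm : L →ₗ[ℝ] A)
    (hsa : ∀ a x, st (s.act a x) = s.act a (st x) + αh a * st x - st x * αh a)
    (hh : cur s.Ac αh = 0) (hm : ∀ a, st (αm a) = αh a - αm a)
    (n : ℕ) (hn : Even n) : ∃ η : AlternatingMap ℝ L M (Fin (2 * n)),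
    ∃ x : Om L M, Anti x ∧ (∀ v, η v = x (List.ofFn v)) ∧
      dd s.Ac' x = s.csO αh n - 2 • s.csO αm n := by
  set κ := αh - αm with hκ
  set α : L →ₗ[ℝ] A ⊗[ℝ] S2 := ten αh ((1 : ℝ[X]) ⊗ₜ[ℝ] (X : ℝ[X]) : S2) - ten κ ((X : ℝ[X]) ⊗ₜ[ℝ] (X : ℝ[X]) : S2) with hα
  set x : Om L M := mp (ll M I2).toAddMonoidHom (mp (s.bc S2).Tr
    (of1 (fun a => LinearMap.lTensor A dt (α a)) *
        qq (cur (s.bc S2).Ac α) n (of1 (fun a => LinearMap.lTensor A ds (α a))))) with hx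
  have xa : Anti x := by
    refine ((Anti.mul (anti_of1 _) (Anti.qq ?_ (anti_of1 _) n)).mp _).mp _
    exact anti_cur (s.bc S2).Ac α.toAddMonoidHom
  have xl : Lin x := by
    refine ((Lin.mul (lin_of1 (LinearMap.lTensor A dt ∘ₗ α).isLinear) (Lin.qq ?_
      (lin_of1 (LinearMap.lTensor A ds ∘ₗ α).isLinear) n)).mp (s.bc S2).tr).mp _
    exact lin_cur (s.bc S2).act α
  have xd : Deg (2 * n) x := by
    rcases Nat.eq_zero_or_pos n with h0 | h0
    · subst h0
      have q0 : ∀ R w : Om L (A ⊗[ℝ] S2), qq R 0 w = 0 := fun R w => Finset.sum_empty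
      have : x = 0 := by rw [hx, q0, mul_zero, map_zero, map_zero]
      intro l _
      rw [this]; rfl
    · rw [hx]
      refine Deg.mp' (Deg.mp' ?_ _) _
      have := (deg_of1 (fun a => LinearMap.lTensor A dt (α a))).mul
        (deg_qq (deg_cur (s.bc S2).Ac α) (deg_of1 (fun a => LinearMap.lTensor A ds (α a))) n
          (k := 2 * n - 1) (by omega))
      rwa [show 1 + (2 * n - 1) = 2 * n by omega] at this
  obtain ⟨η, hη⟩ := exists_alt (2 * n) x xl xa xd
  refine ⟨η, x, xa, hη, ?_⟩
  have h := congrArg (mp (ll M I2).toAddMonoidHom) (s.bc_trans2 dt dt_mul ds ds_mul dt_ds α n)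
  rw [ll_dd, ← hx, map_sub, mp_ll_comp, mp_ll_comp, I2_dt, I2_ds, mp_ll_sub, mp_ll_sub,
    ← mp_ll_comp, ← mp_ll_comp, ← mp_ll_comp, ← mp_ll_comp, bc_T, bc_T, bc_T, bc_T] at h
  have g1 : (fun a => LinearMap.lTensor A (Et 1).toLinearMap (LinearMap.lTensor A ds (α a))) =
      fun a => - ten κ 1 a := by
    funext a; simp [hα, ds, Et_tmul, evl]
  have g0 : (fun a => LinearMap.lTensor A (Et 0).toLinearMap (LinearMap.lTensor A ds (α a))) =
      fun a => 0 := by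
    funext a; simp [hα, ds, Et_tmul, evl]
  have f1 : (fun a => LinearMap.lTensor A (Es 1).toLinearMap (LinearMap.lTensor A dt (α a))) =
      ten αm 1 := by
    funext a; simp [hα, hκ, dt, Es_tmul, evl, TensorProduct.sub_tmul]
  have f0 : (fun a => LinearMap.lTensor A (Es 0).toLinearMap (LinearMap.lTensor A dt (α a))) =
      ten αh 1 := by
    funext a; simp [hα, hκ, dt, Es_tmul, evl, TensorProduct.sub_tmul]
  have a1 : (fun a => LinearMap.lTensor A (Et 1).toLinearMap (α a)) =
      fun a => ten αh 1 a - ten κ X a := by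
    funext a; simp [hα, Et_tmul, evl]
  have b1 : (fun a => LinearMap.lTensor A (Es 1).toLinearMap (α a)) = ten αm X := by
    funext a; simp [hα, hκ, Es_tmul, evl, TensorProduct.sub_tmul]
  have b0 : (fun a => LinearMap.lTensor A (Es 0).toLinearMap (α a)) = ten αh X := by
    funext a; simp [hα, hκ, Es_tmul, evl, TensorProduct.sub_tmul]
  rw [g1, g0, f1, f0, a1, b1, b0, T_zero, map_zero, T_neg, map_neg] at h
  change _ = _ - (s.csO αm n - s.csO αh n) at h
  have key : (s.bc ℝ[X]).T (fun a => ten αh 1 a - ten κ X a) (ten κ 1) n =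
      (s.bc ℝ[X]).T (ten αm X) (ten αm 1) n := by
    have := tr_star_cur (s.bc ℝ[X]).Ac (LinearMap.rTensor ℝ[X] st).toAddMonoidHom ?_ ?_
      (s.bc ℝ[X]).Tr (s.bc ℝ[X]).htr ?_ (ten αh 1) ?_ ?_ (ten αm X) (ten αm 1) n hn
    · rw [T, T, ← this]
      have k1 : (fun a => (LinearMap.rTensor ℝ[X] st).toAddMonoidHom (ten αm 1 a)) = ten κ 1 := by
        funext a; simp [hm, hκ]
      have k2 : (fun a => ten αh 1 a - (LinearMap.rTensor ℝ[X] st).toAddMonoidHom (ten αm X a)) =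
          fun a => ten αh 1 a - ten κ X a := by
        funext a; simp [hm, hκ]
      rw [k1, k2]
    · intro x y
      change LinearMap.rTensor ℝ[X] st _ = LinearMap.rTensor ℝ[X] st y * LinearMap.rTensor ℝ[X] st x
      induction x with
      | zero => simp
      | add x x' h h' => rw [add_mul, map_add, h, h', map_add, mul_add]
      | tmul x p =>
        induction y with
        | zero => simp
        | add x x' h h' => rw [mul_add, map_add, h, h', map_add, add_mul]
        | tmul y q => simp [hst, mul_comm p q]
    · simp [Algebra.TensorProduct.one_def, h1]
    · intro x
      change LinearMap.rTensor ℝ[X] s.tr (LinearMap.rTensor ℝ[X] st x) = LinearMap.rTensor ℝ[X] s.tr x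
      rw [← LinearMap.comp_apply, ← LinearMap.rTensor_comp]
      congr 2
      exact LinearMap.ext hts
    · intro a x
      change LinearMap.rTensor ℝ[X] st (LinearMap.rTensor ℝ[X] (s.act a) x) =
        LinearMap.rTensor ℝ[X] (s.act a) (LinearMap.rTensor ℝ[X] st x) +
          (αh a ⊗ₜ 1) * LinearMap.rTensor ℝ[X] st x - LinearMap.rTensor ℝ[X] st x * (αh a ⊗ₜ 1)
      induction x with
      | zero => simp
      | add x x' h h' => simp only [map_add] at *; rw [h, h']; noncomm_ring
      | tmul x p => simp [hsa, TensorProduct.add_tmul, TensorProduct.sub_tmul]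
    · have k : cur (s.bc ℝ[X]).Ac (ten αh 1) =
          mp (Algebra.TensorProduct.includeLeft : A →ₐ[ℝ] A ⊗[ℝ] ℝ[X]).toRingHom.toAddMonoidHom
            (cur s.Ac αh) := by
        rw [mp_cur s.Ac (s.bc ℝ[X]).Ac]
        · rfl
        · exact map_mul (Algebra.TensorProduct.includeLeft : A →ₐ[ℝ] A ⊗[ℝ] ℝ[X])
        · intro a x
          change (s.act a x) ⊗ₜ 1 = LinearMap.rTensor ℝ[X] (s.act a) (x ⊗ₜ 1)
          simp
      rw [k, hh, map_zero]
  rw [key] at h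
  change _ = -s.csO αm n - 0 - (s.csO αm n - s.csO αh n) at h
  rw [h, two_smul]; abel

end Sys
end Om


namespace Om
open TensorProduct Polynomial
section
variable {C : Type*} [CommRing C] [Algebra ℝ C]

/-- integral of a polynomial with coefficients in `C` -/
noncomputable def Jp : C[X] →ₗ[ℝ] C :=
  Polynomial.lsum (fun k => ((k : ℝ) + 1)⁻¹ • (LinearMap.id : C →ₗ[C] C)) |>.restrictScalars ℝ

theorem Jp_ap (P : C[X]) : Jp P = P.sum (fun k c => ((k : ℝ) + 1)⁻¹ • c) := by
  simp [Jp, Polynomial.lsum_apply]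

theorem poly_zero (P : C[X]) (h : ∀ t : ℝ, P.eval (algebraMap ℝ C t) = 0) : P = 0 := by
  ext k
  rw [coeff_zero, ← Module.forall_dual_apply_eq_zero_iff ℝ]
  intro φ
  set q : ℝ[X] := ∑ i ∈ Finset.range (P.natDegree + 1), monomial i (φ (P.coeff i)) with hq
  have hq0 : q = 0 := by
    apply Polynomial.funext
    intro t
    have := congrArg φ (h t)
    rw [eval_eq_sum_range, map_sum, map_zero] at this
    rw [hq, eval_finsetSum, eval_zero, ← this]
    apply Finset.sum_congr rfl
    intro i _
    rw [eval_monomial, ← map_pow, mul_comm (P.coeff i), ← Algebra.smul_def, map_smul, smul_eq_mul,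
      mul_comm]
  by_cases hk : k < P.natDegree + 1
  · have := congrArg (fun r => r.coeff k) hq0
    simpa [hq, finsetSum_coeff, coeff_monomial, hk] using this
  · rw [coeff_eq_zero_of_natDegree_lt (by omega), map_zero]

theorem exists_poly (u : C ⊗[ℝ] ℝ[X]) : ∃ P : C[X],
    (∀ t : ℝ, Sys.ll C (evl t).toLinearMap u = P.eval (algebraMap ℝ C t)) ∧ Jp P = Sys.ll C Ipol u := by
  induction u with
  | zero => exact ⟨0, by simp, by simp⟩
  | add x y hx hy =>
    obtain ⟨P, h1, h2⟩ := hx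
    obtain ⟨Q, h3, h4⟩ := hy
    exact ⟨P + Q, fun t => by rw [map_add, h1, h3, eval_add], by rw [map_add, h2, h4, map_add]⟩
  | tmul c p =>
    induction p using Polynomial.induction_on' with
    | add p q hx hy =>
      obtain ⟨P, h1, h2⟩ := hx
      obtain ⟨Q, h3, h4⟩ := hy
      exact ⟨P + Q, fun t => by rw [tmul_add, map_add, h1, h3, eval_add],
        by rw [tmul_add, map_add, h2, h4, map_add]⟩
    | monomial k r =>
      refine ⟨monomial k (r • c), fun t => ?_, ?_⟩
      · rw [Sys.ll_tmul, eval_monomial, ← map_pow, mul_comm, ← Algebra.smul_def, smul_smul]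
        simp [evl, aeval_monomial, mul_comm]
      · rw [Sys.ll_tmul, Ipol_monomial, Jp_ap, sum_monomial_index _ _ (by simp), smul_smul]

theorem intPolyTo_eq (u : C ⊗[ℝ] ℝ[X]) (f : ℝ → C)
    (hf : ∀ t, f t = Sys.ll C (evl t).toLinearMap u) : intPolyTo 1 f = Sys.ll C Ipol u := by
  obtain ⟨P, h1, h2⟩ := exists_poly u
  have hex : ∃ P : Polynomial C, ∀ t : ℝ, f t = Polynomial.eval (algebraMap ℝ C t) P :=
    ⟨P, fun t => by rw [hf, h1]⟩
  have hP : hex.choose = P := by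
    rw [← sub_eq_zero]
    apply poly_zero
    intro t
    rw [eval_sub, ← hex.choose_spec t, hf, h1, sub_self]
  rw [intPolyTo, dif_pos hex, hP, ← h2, Jp_ap, sum_over_range _ (by simp)]
  apply Finset.sum_congr rfl
  intro k _
  simp
end
end Om


namespace Om
open TensorProduct Polynomial
section conc
variable {L : Type*} {C : Type*} {E : Type*}
    [LieRing L] [LieAlgebra ℝ L] [CommRing C] [Algebra ℝ C]
    [AddCommGroup E] [Module ℝ E] [Module C E] [IsScalarTower ℝ C E]

/-- commutator with a connection -/
noncomputable def dact (ρ : L →ₗ[ℝ] Derivation ℝ C C) (D : L →ₗ[ℝ] Module.End ℝ E)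
    (hD : IsConn ρ D) : L →ₗ[ℝ] Module.End C E →ₗ[ℝ] Module.End C E where
  toFun a :=
    { toFun := fun X =>
        { toFun := fun e => D a (X e) - X (D a e)
          map_add' := fun e e' => by simp only [map_add]; abel
          map_smul' := fun f e => by
            simp only [map_smul, hD a f, map_add, RingHom.id_apply, smul_sub]; abel }
      map_add' := fun X Y => by
        ext e; simp only [LinearMap.add_apply, LinearMap.coe_mk, AddHom.coe_mk, map_add]; abel
      map_smul' := fun r X => by
        ext e
        simp only [LinearMap.smul_apply, LinearMap.coe_mk, AddHom.coe_mk, map_smul,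
          RingHom.id_apply, smul_sub] }
  map_add' a b := by
    ext X e
    simp only [LinearMap.add_apply, LinearMap.coe_mk, AddHom.coe_mk, map_add]; abel
  map_smul' r a := by
    ext X e
    have := (X.restrictScalars ℝ).map_smul r (D a e)
    simp only [LinearMap.restrictScalars_apply] at this
    simp only [LinearMap.smul_apply, LinearMap.coe_mk, AddHom.coe_mk, map_smul,
          RingHom.id_apply, smul_sub, this]

theorem dact_ap (ρ : L →ₗ[ℝ] Derivation ℝ C C) (D : L →ₗ[ℝ] Module.End ℝ E)
    (hD : IsConn ρ D) (a : L) (X : Module.End C E) (e : E) :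
    dact ρ D hD a X e = D a (X e) - X (D a e) := rfl

/-- difference of connections -/
noncomputable def dlin (ρ : L →ₗ[ℝ] Derivation ℝ C C) (D D1 : L →ₗ[ℝ] Module.End ℝ E)
    (hD : IsConn ρ D) (hD1 : IsConn ρ D1) : L →ₗ[ℝ] Module.End C E where
  toFun a :=
    { toFun := fun e => D1 a e - D a e
      map_add' := fun e e' => by simp only [map_add]; abel
      map_smul' := fun f e => by
        simp only [hD a f, hD1 a f, RingHom.id_apply, smul_sub]; abel }
  map_add' a b := by
    ext e
    simp only [LinearMap.add_apply, LinearMap.coe_mk, AddHom.coe_mk, map_add]; abel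
  map_smul' r a := by
    ext e
    simp only [LinearMap.smul_apply, LinearMap.coe_mk, AddHom.coe_mk, map_smul,
          RingHom.id_apply, smul_sub]

theorem dlin_ap (ρ : L →ₗ[ℝ] Derivation ℝ C C) (D D1 : L →ₗ[ℝ] Module.End ℝ E)
    (hD : IsConn ρ D) (hD1 : IsConn ρ D1) (a : L) (e : E) :
    dlin ρ D D1 hD hD1 a e = D1 a e - D a e := rfl

theorem tr_dact [Module.Finite C E] [Module.Free C E]
    (ρ : L →ₗ[ℝ] Derivation ℝ C C) (D : L →ₗ[ℝ] Module.End ℝ E)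
    (hD : IsConn ρ D) (a : L) (X : Module.End C E) :
    LinearMap.trace C E (dact ρ D hD a X) = ρ a (LinearMap.trace C E X) := by
  classical
  let b := Module.Free.chooseBasis C E
  have ht : ∀ Y : Module.End C E, LinearMap.trace C E Y = ∑ i, b.repr (Y (b i)) i := by
    intro Y
    rw [LinearMap.trace_eq_matrix_trace C b, Matrix.trace]
    simp [LinearMap.toMatrix_apply]
  let del : E → E := fun e => ∑ j, ρ a (b.repr e j) • b j
  have hdel : ∀ e j, b.repr (del e) j = ρ a (b.repr e j) := by
    intro e j
    simp [del, Finsupp.single_apply]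
  let Γ : Module.End C E :=
    { toFun := fun e => D a e - del e
      map_add' := fun e e' => by
        have : del (e + e') = del e + del e' := by
          simp [del, add_smul, Finset.sum_add_distrib]
        rw [map_add, this]; abel
      map_smul' := fun f e => by
        have : del (f • e) = f • del e + ρ a f • e := by
          apply b.repr.injective
          ext j
          rw [hdel]
          simp only [map_add, map_smul, Finsupp.add_apply, Finsupp.smul_apply, hdel, smul_eq_mul,
            Derivation.leibniz]
          ring
        rw [hD a f, this, RingHom.id_apply, smul_sub]; abel }
  have hd0 : ∀ i, del (b i) = 0 := by
    intro i
    apply b.repr.injective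
    ext j
    rw [hdel, b.repr_self, Finsupp.single_apply]
    split_ifs <;> simp
  have h1 : ∀ i, b.repr (dact ρ D hD a X (b i)) i =
      b.repr ((Γ * X - X * Γ) (b i)) i + ρ a (b.repr (X (b i)) i) := by
    intro i
    rw [← hdel]
    have : dact ρ D hD a X (b i) = (Γ * X - X * Γ) (b i) + del (X (b i)) := by
      rw [dact_ap]
      change _ = (D a (X (b i)) - del (X (b i)) - X (D a (b i) - del (b i))) + _
      rw [hd0, sub_zero]; abel
    rw [this]; simp
  rw [ht, Finset.sum_congr rfl (fun i _ => h1 i), Finset.sum_add_distrib, ← ht, map_sub,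
    LinearMap.trace_mul_comm, sub_self, zero_add, ht, map_sum]

/-- the concrete system -/
noncomputable def csys [Module.Finite C E] [Module.Free C E] (ρ : L →ₗ[ℝ] Derivation ℝ C C)
    (D : L →ₗ[ℝ] Module.End ℝ E)
    (hD : IsConn ρ D) (hflat : ∀ a b : L, curv D a b = 0) : Sys L (Module.End C E) C where
  act := dact ρ D hD
  act' a := (ρ a : C →ₗ[ℝ] C)
  tr := (LinearMap.trace C E).restrictScalars ℝ
  hder a X Y := by
    ext e
    simp only [dact_ap, Module.End.mul_apply, LinearMap.add_apply, map_sub]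
    abel
  hact a b X := by
    ext e
    have h : ∀ e, D ⁅a, b⁆ e = D a (D b e) - D b (D a e) := fun e => by
      have := LinearMap.congr_fun (hflat a b) e
      simp only [curv, LinearMap.sub_apply, Module.End.mul_apply, LinearMap.zero_apply] at this
      exact (sub_eq_zero.mp this).symm
    simp only [dact_ap, LinearMap.sub_apply, map_sub, h]
    abel
  htr X Y := LinearMap.trace_mul_comm C X Y
  htra a X := tr_dact ρ D hD a X

theorem cur2 {B : Type*} [Ring B] (act : L → B →+ B) (β : L → B) (a b : L) :
    cur act β [a, b] = act a (β b) - β ⁅a, b⁆ - act b (β a) + (β a * β b - β b * β a) := by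
  have h1 : dd act (of1 β) [a, b] = act a (β b) - β ⁅a, b⁆ - act b (β a) :=
    congrFun (io_dd_of1 act a β) [b]
  have h2 : (of1 β * of1 β : Om L B) [a, b] = β a * β b - β b * β a := by
    simp [mul_cons, mul_nil, sg_of1, io_of1, sub_eq_add_neg]
  rw [cur, add_ap, h1, h2]

theorem cur_eq_curv [Module.Finite C E] [Module.Free C E] (ρ : L →ₗ[ℝ] Derivation ℝ C C)
    (D D1 : L →ₗ[ℝ] Module.End ℝ E)
    (hD : IsConn ρ D) (hD1 : IsConn ρ D1) (hflat : ∀ a b : L, curv D a b = 0) (t : ℝ) (a b : L)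
    (e : E) :
    cur (csys ρ D hD hflat).Ac (fun a => t • dlin ρ D D1 hD hD1 a) [a, b] e =
      curv (D + t • (D1 - D)) a b e := by
  rw [cur2]
  have hf := LinearMap.congr_fun (hflat a b) e
  simp only [curv, LinearMap.sub_apply, Module.End.mul_apply, LinearMap.zero_apply] at hf
  have hf' : D a (D b e) = D b (D a e) + D ⁅a, b⁆ e := by
    rw [sub_sub, sub_eq_zero] at hf; exact hf
  change (dact ρ D hD a _ - _ - dact ρ D hD b _ + _) e = _
  simp only [LinearMap.add_apply, LinearMap.sub_apply, dact_ap, LinearMap.smul_apply, dlin_ap,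
    Module.End.mul_apply, curv, map_add, map_sub, map_smul, hf']
  have hs : ∀ (c : L) (x : E), dlin ρ D D1 hD hD1 c (t • x) = t • dlin ρ D D1 hD hD1 c x :=
    fun c x => ((dlin ρ D D1 hD hD1 c).restrictScalars ℝ).map_smul t x
  simp only [dlin_ap, map_sub, map_smul, smul_sub, smul_add]
  abel

end conc
end Om


namespace Om
open TensorProduct Polynomial
section conc2
variable {L : Type*} {C : Type*} {E : Type*}
    [LieRing L] [LieAlgebra ℝ L] [CommRing C] [Algebra ℝ C]
    [AddCommGroup E] [Module ℝ E] [Module C E] [IsScalarTower ℝ C E]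
    [Module.Finite C E] [Module.Free C E]

/-- restriction of scalars as a ring hom -/
def iot : Module.End C E →+* Module.End ℝ E where
  toFun g := g.restrictScalars ℝ
  map_one' := rfl
  map_mul' _ _ := rfl
  map_zero' := rfl
  map_add' _ _ := rfl

theorem trR_iot (g : Module.End C E) : trR C (iot g) = LinearMap.trace C E g := by
  have hex : ∃ g' : E →ₗ[C] E, ⇑g' = ⇑(iot g : Module.End ℝ E) := ⟨g, rfl⟩
  have : hex.choose = g := by
    apply DFunLike.coe_injective
    rw [hex.choose_spec]; rfl
  unfold trR
  rw [dif_pos hex, this]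

theorem wpow_eq (R : (Fin 2 → L) → Module.End ℝ E) (x : Om L (Module.End ℝ E)) (hx : Anti x)
    (hd : Deg 2 x) (hR : ∀ v, R v = x (List.ofFn v)) (n : ℕ) (v : Fin (2 * n) → L) :
    wpow R n v = (x ^ n) (List.ofFn v) := by
  induction n with
  | zero => rfl
  | succ n ih =>
    have hR' : R = fun v => x (List.ofFn v) := funext hR
    have e : wpow R n = fun v => (x ^ n) (List.ofFn v) := funext ih
    have h2 : ∀ w, wedge R (wpow R n) w = (x ^ (n + 1)) (List.ofFn w) := by
      intro w
      rw [pow_succ', e, hR']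
      exact wedge_eq 2 (2 * n) x (x ^ n) hx hd (hx.pow n) (deg_pow hd n) w
    have h3 : wpow R (n + 1) v =
        wedge R (wpow R n) (fun i => v (Fin.cast (by omega) i)) := by rw [wpow]
    have h4 := List.ofFn_congr (show 2 * (n + 1) = 2 + 2 * n by omega) v
    rw [h3, h2, h4]

/-- adjoint -/
noncomputable def stm (h : E →ₗ[C] E →ₗ[C] C) (hnd : Function.Bijective (⇑h)) :
    Module.End C E →ₗ[ℝ] Module.End C E where
  toFun X := (LinearEquiv.ofBijective h hnd).symm.conj (Module.Dual.transpose (R := C) X)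
  map_add' X Y := by simp
  map_smul' r X := by
    ext e
    apply (LinearEquiv.ofBijective h hnd).injective
    have := ((LinearEquiv.ofBijective h hnd).toLinearMap.restrictScalars ℝ).map_smul r
    simp only [LinearMap.restrictScalars_apply, LinearEquiv.coe_coe] at this
    simp only [LinearMap.smul_apply, RingHom.id_apply, this]
    simp [LinearEquiv.conj_apply]

variable (h : E →ₗ[C] E →ₗ[C] C) (hnd : Function.Bijective (⇑h))

theorem stm_ap (X : Module.End C E) (s t : E) : h (stm h hnd X s) t = h s (X t) := by
  have : h (stm h hnd X s) = Module.Dual.transpose (R := C) X (h s) := by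
    have := (LinearEquiv.ofBijective h hnd).apply_symm_apply (Module.Dual.transpose (R := C) X (h s))
    exact this
  rw [this]; rfl

theorem end_ext (h : E →ₗ[C] E →ₗ[C] C) (hnd : Function.Bijective (⇑h))
    {X Y : Module.End C E} (hXY : ∀ s t, h (X s) t = h (Y s) t) : X = Y := by
  ext s
  apply hnd.1
  ext t
  exact hXY s t

theorem stm_mul (X Y : Module.End C E) : stm h hnd (X * Y) = stm h hnd Y * stm h hnd X := by
  apply end_ext h hnd
  intro s t
  simp [stm_ap]

theorem stm_one : stm h hnd 1 = 1 := by
  apply end_ext h hnd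
  intro s t
  simp [stm_ap]

theorem stm_tr (X : Module.End C E) : LinearMap.trace C E (stm h hnd X) = LinearMap.trace C E X := by
  change LinearMap.trace C E ((LinearEquiv.ofBijective h hnd).symm.conj (Module.Dual.transpose (R := C) X)) = _
  rw [LinearMap.trace_conj', LinearMap.trace_transpose']

theorem dh_flat (h : E →ₗ[C] E →ₗ[C] C) (hnd : Function.Bijective (⇑h))
    (ρ : L →ₗ[ℝ] Derivation ℝ C C)
    (hρ : ∀ (a b : L) (f : C), ρ ⁅a, b⁆ f = ρ a (ρ b f) - ρ b (ρ a f))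
    (D Dh : L →ₗ[ℝ] Module.End ℝ E)
    (hadj' : ∀ (a : L) (s t : E), h (Dh a s) t = ρ a (h s t) - h s (D a t))
    (hflat : ∀ a b : L, curv D a b = 0) (a b : L) : curv Dh a b = 0 := by
  ext s
  apply hnd.1
  ext t
  have hf := congrArg (h s) (LinearMap.congr_fun (hflat a b) t)
  simp only [curv, LinearMap.sub_apply, Module.End.mul_apply, LinearMap.zero_apply, map_sub,
    map_zero] at hf ⊢
  simp only [hadj', map_sub, hρ]
  linear_combination -hf


theorem csPair_eq (ρ : L →ₗ[ℝ] Derivation ℝ C C) (D D1 : L →ₗ[ℝ] Module.End ℝ E)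
    (hD : IsConn ρ D) (hD1 : IsConn ρ D1) (hflat : ∀ a b : L, curv D a b = 0) (n : ℕ)
    (v : Fin (2 * n + 1) → L) :
    csPair C D D1 (n + 1) v =
      ((n + 1) • (csys ρ D hD hflat).csO (dlin ρ D D1 hD hD1) n) (List.ofFn v) := by
  rw [nsmul_ap, ← Nat.cast_smul_eq_nsmul ℝ]
  unfold csPair
  congr 1
  refine intPolyTo_eq (((csys ρ D hD hflat).bc ℝ[X]).T (Sys.ten (dlin ρ D D1 hD hD1) X)
    (Sys.ten (dlin ρ D D1 hD hD1) 1) n (List.ofFn v)) _ ?_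
  intro t
  set s := csys ρ D hD hflat with hs
  set β := dlin ρ D D1 hD hD1 with hβ
  have hR : (fun a => Sys.llr (Module.End C E) (evl t) (Sys.ten β X a)) = ⇑(t • β) := by
    funext a; simp [evl]
  have hR' : (fun a => Sys.llr (Module.End C E) (evl t) (Sys.ten β 1 a)) = ⇑β := by
    funext a; simp [evl]
  have h1 := congrFun (s.ll_T (evl t) (Sys.ten β X) (Sys.ten β 1) n) (List.ofFn v)
  rw [hR, hR'] at h1
  refine Eq.trans ?_ h1.symm
  set R := cur s.Ac ⇑(t • β) with hRd
  set J : Module.End C E →+ Module.End ℝ E := (iot (C := C) (E := E)).toAddMonoidHom with hJ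
  have Ra : Anti R := anti_cur s.Ac (t • β).toAddMonoidHom
  have Rd : Deg 2 R := deg_cur s.Ac _
  have e1 : (fun v : Fin 1 → L => (D1 - D) (v 0)) = fun v => mp J (of1 β) (List.ofFn v) := by
    funext v
    rfl
  have e2 : wpow (curv2 (D + t • (D1 - D))) n = fun v => (mp J R ^ n) (List.ofFn v) := by
    funext v
    apply wpow_eq _ _ (Ra.mp J) (Deg.mp' Rd J)
    intro v
    ext e
    exact (cur_eq_curv ρ D D1 hD hD1 hflat t (v 0) (v 1) e).symm
  have h2 : ∀ w, wedge (fun v : Fin 1 → L => (D1 - D) (v 0))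
      (wpow (curv2 (D + t • (D1 - D))) n) w = J ((of1 β * R ^ n) (List.ofFn w)) := by
    intro w
    rw [e1, e2]
    refine (wedge_eq 1 (2 * n) (mp J (of1 β)) (mp J R ^ n) ((anti_of1 _).mp J)
      (Deg.mp' (deg_of1 _) J) ((Ra.mp J).pow n) (deg_pow (Deg.mp' Rd J) n) w).trans ?_
    rw [← mp_pow J (map_mul iot) (map_one iot), ← mp_mul J (map_mul iot)]
    rfl
  change trR C (wedge (fun v : Fin 1 → L => (D1 - D) (v 0))
      (wpow (curv2 (D + t • (D1 - D))) n) _) = _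
  rw [h2]
  refine (trR_iot _).trans ?_
  refine congrArg (fun l => LinearMap.trace C E ((of1 β * R ^ n) l)) ?_
  exact (List.ofFn_congr (by omega) v).symm

end conc2
end Om


/-- for flat `∇`, odd `p`, and a metric ℝ-linear connection `∇_m`,
the form `cs_p(∇,∇_m)` is closed and `cs_p(∇,∇^h) − 2·cs_p(∇,∇_m)` is `d_ρ`-exact;
hence `u_{2p−1} = [2·cs_p(∇,∇_m)]`. -/
theorem stmt16 {L : Type*} {C : Type*} {E : Type*}
    [LieRing L] [LieAlgebra ℝ L] [CommRing C] [Algebra ℝ C] [Module C L]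
    [AddCommGroup E] [Module ℝ E] [Module C E] [IsScalarTower ℝ C E]
    [Module.Finite C E] [Module.Free C E]
    (ρ : L →ₗ[ℝ] Derivation ℝ C C)
    (hρ : ∀ (a b : L) (f : C), ρ ⁅a, b⁆ f = ρ a (ρ b f) - ρ b (ρ a f))
    (hLeib : ∀ (a b : L) (f : C), ⁅a, f • b⁆ = f • ⁅a, b⁆ + ρ a f • b)
    (h : E →ₗ[C] E →ₗ[C] C) (hsymm : ∀ s t : E, h s t = h t s)
    (hnd : Function.Bijective (⇑h))
    (D Dh Dm : L →ₗ[ℝ] Module.End ℝ E)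
    (hD : IsConn ρ D) (hDh : IsConn ρ Dh) (hDm : IsConn ρ Dm)
    (hadj : ∀ (a : L) (s t : E), ρ a (h s t) = h (D a s) t + h s (Dh a t))
    (hmetric : ∀ (a : L) (s t : E), ρ a (h s t) = h (Dm a s) t + h s (Dm a t))
    (hflat : ∀ a b : L, curv D a b = 0)
    (p : ℕ) (hp : 1 ≤ p) (hpodd : Odd p) :
    dRho ρ (csPair C D Dm p) = 0 ∧
    ∃ η : AlternatingMap ℝ L C (Fin (2 * p - 2)),
      ∀ v : Fin (2 * (p - 1) + 1) → L,
        dRho ρ (⇑η) (fun i => v (Fin.cast (by omega) i))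
          = csPair C D Dh p v - 2 • csPair C D Dm p v := by
  obtain ⟨n, rfl⟩ : ∃ n, p = n + 1 := ⟨p - 1, by omega⟩
  have hn : Even n := by
    rcases Nat.even_or_odd n with h | h
    · exact h
    · exact absurd h.add_one (Nat.not_even_iff_odd.mpr hpodd)
  have hadj' : ∀ (a : L) (s t : E), h (Dh a s) t = ρ a (h s t) - h s (D a t) := by
    intro a s t
    rw [hsymm s t, hadj a t s, hsymm (Dh a s), hsymm s]; abel
  have hhf := Om.dh_flat h hnd ρ hρ D Dh hadj' hflat
  let s := Om.csys ρ D hD hflat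
  let αh := Om.dlin ρ D Dh hD hDh
  let αm := Om.dlin ρ D Dm hD hDm
  have hst := Om.stm_mul h hnd
  have h1 := Om.stm_one h hnd
  have hts : ∀ x, s.tr (Om.stm h hnd x) = s.tr x := Om.stm_tr h hnd
  have hsa : ∀ a x, Om.stm h hnd (s.act a x) =
      s.act a (Om.stm h hnd x) + αh a * Om.stm h hnd x - Om.stm h hnd x * αh a := by
    intro a x
    apply Om.end_ext h hnd
    intro u t
    change h (Om.stm h hnd (Om.dact ρ D hD a x) u) t =
      h ((Om.dact ρ D hD a (Om.stm h hnd x) + αh a * Om.stm h hnd x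
        - Om.stm h hnd x * αh a) u) t
    simp only [Om.stm_ap, LinearMap.add_apply, LinearMap.sub_apply, Om.dact_ap,
      Module.End.mul_apply, map_sub, map_add, αh, Om.dlin_ap, hadj']
    abel
  have hm : ∀ a, Om.stm h hnd (αm a) = αh a - αm a := by
    intro a
    apply Om.end_ext h hnd
    intro u t
    have := hmetric a u t
    simp only [Om.stm_ap, LinearMap.sub_apply, αm, αh, Om.dlin_ap, map_sub, hadj']
    rw [this]; abel
  have hh : Om.cur s.Ac αh = 0 := by
    have e : Om.cur s.Ac αh = Om.cur s.Ac (fun a => (1 : ℝ) • αh a) := by simp only [one_smul]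
    refine funext fun l => ?_
    by_cases hl : l.length = 2
    · obtain ⟨a, b, rfl⟩ := List.length_eq_two.mp hl
      rw [e]
      refine LinearMap.ext fun u => ?_
      refine (Om.cur_eq_curv ρ D Dh hD hDh hflat 1 a b u).trans ?_
      rw [one_smul, add_sub_cancel, hhf]; rfl
    · exact Om.deg_cur s.Ac αh l hl
  have em : csPair C D Dm (n + 1) = fun v => ((n + 1) • s.csO αm n) (List.ofFn v) :=
    funext (Om.csPair_eq ρ D Dm hD hDm hflat n)
  have eh : csPair C D Dh (n + 1) = fun v => ((n + 1) • s.csO αh n) (List.ofFn v) :=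
    funext (Om.csPair_eq ρ D Dh hD hDh hflat n)
  have ns : ∀ x : Om L C, Om.Anti x → Om.Anti ((n + 1) • x) := by
    intro x hx l₁ a b l₂
    rw [Om.nsmul_ap, Om.nsmul_ap, hx, smul_neg]
  constructor
  · funext v
    rw [em]
    refine (Om.dGen_eq s.Ac' (2 * n + 1) _ (ns _ (s.csO_anti αm n)) v).trans ?_
    rw [map_nsmul, s.closed (Om.stm h hnd) hst h1 hts αh αm hsa hh hm n hn, smul_zero]
    rfl
  · obtain ⟨η, x, xa, hη, hx⟩ := s.exact' (Om.stm h hnd) hst h1 hts αh αm hsa hh hm n hn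
    refine ⟨((n + 1) • η : AlternatingMap ℝ L C (Fin (2 * n))), fun v => ?_⟩
    have e : (⇑((n + 1) • η : AlternatingMap ℝ L C (Fin (2 * n)))) =
        fun v => ((n + 1) • x) (List.ofFn v) := by
      funext v
      rw [Om.nsmul_ap, ← hη]; rfl
    rw [em, eh]
    change dGen (fun a c => s.Ac' a c) (n := 2 * n)
      (⇑((n + 1) • η : AlternatingMap ℝ L C (Fin (2 * n)))) v = _
    rw [e]
    refine (Om.dGen_eq s.Ac' (2 * n) _ (ns _ xa) v).trans ?_
    rw [map_nsmul, hx, nsmul_sub, Om.sub_ap, smul_comm]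
    rfl
end
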